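/- Let f be a multicritical circle map with irrational rotation number, chosen critical point c_0, which is canonical: each critical point c_k has a neighborhood U_k on which f(x) = f(c_k) + (x−c_k)|x−c_k|^{s_k−1}. There exists a positive integer n_0 = n_0(f) such that for all n ≥ n_0 the following holds: for each non-empty reduced bridge G_i* = ⋃_{k=k_i+2}^{k_{i+1}−2} Δ_k ⊂ I_n(c_0), the Schwarzian derivative of f^{q_{n+1}} is negative at every point of G_i*: Sf^{q_{n+1}}(x) < 0 for all x ∈ G_i*. -/

import Mathlib

open Set Filter MeasureTheory

noncomputable section

/-- The Schwarzian derivative `Sf = (f''/f')' - (1/2) (f''/f')^2`. -/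
def schwarzianDeriv (f : ℝ → ℝ) (x : ℝ) : ℝ :=
  deriv (fun y => deriv (deriv f) y / deriv f y) x
    - (1 / 2) * (deriv (deriv f) x / deriv f x) ^ 2

/-- A multicritical circle map, described through its lift `F : ℝ → ℝ` to the real line.
It is an orientation-preserving `C^3` circle homeomorphism with finitely many critical
points `c 0, …, c (N-1)`, each of non-flat power-law type: near `c i` the derivative is
pinched between two multiples of `|x - c i| ^ (s i - 1)` with `s i > 1`, the Schwarzian
derivative is negative on a punctured neighborhood of each critical point, and
`log (F')` has bounded variation (bounded by `v`) off the critical neighborhoods. -/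
structure MCM where
  /-- the lift of the circle map -/
  F : ℝ → ℝ
  smooth : ContDiff ℝ 3 F
  mono : StrictMono F
  deg1 : ∀ x, F (x + 1) = F x + 1
  /-- number of critical points -/
  N : ℕ
  N_pos : 0 < N
  /-- the critical points (one representative in `[0,1)` for each) -/
  c : Fin N → ℝ
  c_mem : ∀ i, c i ∈ Set.Ico (0 : ℝ) 1
  c_inj : Function.Injective c
  isCrit : ∀ i, deriv F (c i) = 0
  critOnly : ∀ x, deriv F x = 0 → ∃ (i : Fin N) (k : ℤ), x = c i + (k : ℝ)
  /-- neighborhoods of the critical points -/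
  W : Fin N → Set ℝ
  W_open : ∀ i, IsOpen (W i)
  c_mem_W : ∀ i, c i ∈ W i
  /-- the criticalities (power-law exponents) -/
  s : Fin N → ℝ
  s_gt_one : ∀ i, 1 < s i
  al : Fin N → ℝ
  be : Fin N → ℝ
  al_pos : ∀ i, 0 < al i
  al_lt_be : ∀ i, al i < be i
  powerLaw : ∀ i, ∀ x ∈ W i, x ≠ c i →
    al i * |x - c i| ^ (s i - 1) < deriv F x ∧
      deriv F x < be i * |x - c i| ^ (s i - 1)
  negSchwarzian : ∀ i, ∀ x ∈ W i, x ≠ c i → schwarzianDeriv F x < 0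
  /-- bound for the variation of `log DF` off the critical neighborhoods -/
  v : ℝ
  v_pos : 0 < v
  logDF_var : eVariationOn (fun x => Real.log (deriv F x))
      (Set.Icc 0 1 \ ⋃ (i) (k : ℤ), (fun y => y + (k : ℝ)) '' W i) ≤ ENNReal.ofReal v

/-- The circle map with lift `F` has rotation number `ρ`. -/
def HasRotationNumber (F : ℝ → ℝ) (ρ : ℝ) : Prop :=
  Tendsto (fun n : ℕ => F^[n] 0 / n) atTop (nhds ρ)

/-- The Gauss map `x ↦ {1/x}`. -/
def gaussMap (x : ℝ) : ℝ := Int.fract x⁻¹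

/-- Partial quotients `a_n` of the continued fraction expansion of `ρ ∈ (0,1)`. -/
def cfDigit (ρ : ℝ) (n : ℕ) : ℕ := (⌊(gaussMap^[n] ρ)⁻¹⌋).toNat

/-- Return times: the denominators `q_n` of the convergents of `ρ`,
`q_0 = 1`, `q_1 = a_0`, `q_{n+1} = a_n q_n + q_{n-1}`. -/
def qDen (ρ : ℝ) : ℕ → ℕ
  | 0 => 1
  | 1 => cfDigit ρ 0
  | n + 2 => cfDigit ρ (n + 1) * qDen ρ (n + 1) + qDen ρ n

/-- Numerators `p_n` of the convergents of `ρ`: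
`p_0 = 0`, `p_1 = 1`, `p_{n+1} = a_n p_n + p_{n-1}`. -/
def pNum (ρ : ℝ) : ℕ → ℕ
  | 0 => 0
  | 1 => 1
  | n + 2 => cfDigit ρ (n + 1) * pNum ρ (n + 1) + pNum ρ n

/-- The lift of the atom `I_ℓ^j(x) = f^j(I_ℓ(x))`, where `I_ℓ(x)` is the interval with
endpoints `x` and `f^{q_ℓ}(x)`; the lift of `f^{q_ℓ}(x)` adjacent to `x` is
`F^[q_ℓ] x - p_ℓ`. -/
def atomSet (F : ℝ → ℝ) (ρ x : ℝ) (ℓ j : ℕ) : Set ℝ :=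
  Set.uIcc (F^[j] x) (F^[j + qDen ρ ℓ] x - (pNum ρ ℓ : ℝ))

/-- The length of the atom `I_ℓ^j(x)`. -/
def atomLen (F : ℝ → ℝ) (ρ x : ℝ) (ℓ j : ℕ) : ℝ :=
  |F^[j + qDen ρ ℓ] x - (pNum ρ ℓ : ℝ) - F^[j] x|

/-- The two endpoints (as lifts) of the atom `I_ℓ^j(x)`. -/
def atomEnds (F : ℝ → ℝ) (ρ x : ℝ) (ℓ j : ℕ) : Set ℝ :=
  {F^[j] x, F^[j + qDen ρ ℓ] x - (pNum ρ ℓ : ℝ)}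

/-- `(ℓ, j)` indexes an atom of the `n`-th dynamical partition
`P_n(x) = {I_n^i(x) : i < q_{n+1}} ∪ {I_{n+1}^j(x) : j < q_n}`. -/
def IsAtomIdx (ρ : ℝ) (n ℓ j : ℕ) : Prop :=
  (ℓ = n ∧ j < qDen ρ (n + 1)) ∨ (ℓ = n + 1 ∧ j < qDen ρ n)

/-- Two distinct atoms are adjacent when they share an endpoint on the circle,
i.e. when some endpoints of their lifts differ by an integer. -/
def AdjacentAtoms (F : ℝ → ℝ) (ρ x : ℝ) (ℓ₁ j₁ ℓ₂ j₂ : ℕ) : Prop :=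
  (ℓ₁, j₁) ≠ (ℓ₂, j₂) ∧
    ∃ u ∈ atomEnds F ρ x ℓ₁ j₁, ∃ w ∈ atomEnds F ρ x ℓ₂ j₂, ∃ k : ℤ, w = u + (k : ℝ)

/-- `k` is a *critical time* at level `n`: `k < a_{n+1}` and the atom
`Δ_k = f^{q_n + k q_{n+1}}(I_{n+1}(c₀))` contains a critical point of `f^{q_{n+1}}`. -/
def CritTime (f : MCM) (ρ : ℝ) (i₀ : Fin f.N) (n k : ℕ) : Prop :=
  k < cfDigit ρ (n + 1) ∧
    ∃ x ∈ atomSet f.F ρ (f.c i₀) (n + 1) (qDen ρ n + k * qDen ρ (n + 1)),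
      deriv (f.F^[qDen ρ (n + 1)]) x = 0

/-- `(i, j)` bounds a bridge: `i` is a critical time (or the conventional time `k₀ = 0`),
there is no critical time strictly between `i` and `j`, and `j` is either the next
critical time or the final index `a_{n+1}`. The corresponding bridge is
`G = ⋃_{k=i+1}^{j-1} Δ_k`. -/
def IsBridgePair (f : MCM) (ρ : ℝ) (i₀ : Fin f.N) (n i j : ℕ) : Prop :=
  (CritTime f ρ i₀ n i ∨ i = 0) ∧ i < j ∧
    (∀ k, i < k → k < j → ¬CritTime f ρ i₀ n k) ∧
    (CritTime f ρ i₀ n j ∨ j = cfDigit ρ (n + 1))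

/-- The length of the union `⋃_{k=lo}^{hi-1} Δ_k` of consecutive atoms
`Δ_k = f^{q_n + k q_{n+1}}(I_{n+1}(c₀))`. -/
def bridgeLen (f : MCM) (ρ : ℝ) (i₀ : Fin f.N) (n lo hi : ℕ) : ℝ :=
  ∑ k ∈ Finset.Ico lo hi, atomLen f.F ρ (f.c i₀) (n + 1) (qDen ρ n + k * qDen ρ (n + 1))




/-- signed distance `q_n ρ - p_n` -/
def tErr (ρ : ℝ) (n : ℕ) : ℝ := qDen ρ n * ρ - pNum ρ n

lemma gauss_mem (ρ : ℝ) (hirr : Irrational ρ) (hmem : ρ ∈ Set.Ioo (0 : ℝ) 1) (n : ℕ) :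
    Irrational (gaussMap^[n] ρ) ∧ gaussMap^[n] ρ ∈ Set.Ioo (0 : ℝ) 1 := by
  induction n with
  | zero => exact ⟨hirr, hmem⟩
  | succ n ih =>
    rw [Function.iterate_succ_apply']
    obtain ⟨h1, h2⟩ := ih
    have h3 : Irrational (gaussMap (gaussMap^[n] ρ)) := by
      unfold gaussMap Int.fract
      exact (h1.inv).sub_intCast _
    refine ⟨h3, ?_, Int.fract_lt_one _⟩
    exact lt_of_le_of_ne (Int.fract_nonneg _) (Ne.symm h3.ne_zero)

lemma digit_eq (ρ : ℝ) (hirr : Irrational ρ) (hmem : ρ ∈ Set.Ioo (0 : ℝ) 1) (n : ℕ) :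
    (cfDigit ρ n : ℝ) = (gaussMap^[n] ρ)⁻¹ - gaussMap^[n+1] ρ ∧ 1 ≤ cfDigit ρ n := by
  obtain ⟨h1, h2⟩ := gauss_mem ρ hirr hmem n
  have h3 : 1 ≤ ⌊(gaussMap^[n] ρ)⁻¹⌋ := by
    rw [Int.le_floor]
    have := (one_lt_inv₀ h2.1).2 h2.2
    exact_mod_cast this.le
  constructor
  · rw [Function.iterate_succ_apply']
    unfold gaussMap Int.fract
    have : ((cfDigit ρ n : ℤ) : ℝ) = ((⌊(gaussMap^[n] ρ)⁻¹⌋ : ℤ) : ℝ) := by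
      unfold cfDigit
      rw [Int.toNat_of_nonneg (by omega)]
    have h4 : (cfDigit ρ n : ℝ) = ((cfDigit ρ n : ℤ) : ℝ) := by push_cast; rfl
    rw [h4, this]
    unfold gaussMap Int.fract
    ring
  · unfold cfDigit; omega

lemma tErr_succ (ρ : ℝ) (hirr : Irrational ρ) (hmem : ρ ∈ Set.Ioo (0 : ℝ) 1) (n : ℕ) :
    tErr ρ (n+1) = - gaussMap^[n+1] ρ * tErr ρ n := by
  induction n with
  | zero =>
    have := (digit_eq ρ hirr hmem 0).1
    unfold tErr
    simp only [qDen, pNum, zero_add]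
    rw [this]
    have : ρ ≠ 0 := hirr.ne_zero
    simp
    field_simp
    ring
  | succ n ih =>
    have h0 := (digit_eq ρ hirr hmem (n+1)).1
    have h1 : tErr ρ (n+2) = cfDigit ρ (n+1) * tErr ρ (n+1) + tErr ρ n := by
      unfold tErr
      simp only [qDen, pNum]
      push_cast; ring
    have h2 : gaussMap^[n+1] ρ ≠ 0 := (gauss_mem ρ hirr hmem (n+1)).2.1.ne'
    rw [h1, h0, ih]
    field_simp
    ring

lemma tErr_sign (ρ : ℝ) (hirr : Irrational ρ) (hmem : ρ ∈ Set.Ioo (0 : ℝ) 1) (n : ℕ) :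
    0 < (-1)^n * tErr ρ n := by
  induction n with
  | zero => simp [tErr, qDen, pNum]; exact hmem.1
  | succ n ih =>
    rw [tErr_succ ρ hirr hmem, pow_succ]
    have := (gauss_mem ρ hirr hmem (n+1)).2.1
    have := mul_pos this ih
    nlinarith

lemma tErr_abs_lt (ρ : ℝ) (hirr : Irrational ρ) (hmem : ρ ∈ Set.Ioo (0 : ℝ) 1) (n : ℕ) :
    |tErr ρ (n+1)| < |tErr ρ n| := by
  rw [tErr_succ ρ hirr hmem, abs_mul, abs_neg]
  obtain ⟨h1, h2⟩ := (gauss_mem ρ hirr hmem (n+1)).2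
  have h3 : tErr ρ n ≠ 0 := by
    intro h; have := tErr_sign ρ hirr hmem n; rw [h] at this; simp at this
  rw [abs_of_pos h1]
  have := abs_pos.2 h3
  nlinarith

lemma tErr_abs_lt_one (ρ : ℝ) (hirr : Irrational ρ) (hmem : ρ ∈ Set.Ioo (0 : ℝ) 1) (n : ℕ) :
    |tErr ρ n| < 1 := by
  induction n with
  | zero => simp [tErr, qDen, pNum, abs_lt]; exact ⟨by linarith [hmem.1], hmem.2⟩
  | succ n ih => exact (tErr_abs_lt ρ hirr hmem n).trans ih

lemma qDen_pos_le (ρ : ℝ) (hirr : Irrational ρ) (hmem : ρ ∈ Set.Ioo (0 : ℝ) 1) (n : ℕ) :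
    1 ≤ qDen ρ n ∧ qDen ρ n ≤ qDen ρ (n+1) := by
  induction n with
  | zero => simp [qDen]; exact (digit_eq ρ hirr hmem 0).2
  | succ n ih =>
    refine ⟨ih.1.trans ih.2, ?_⟩
    show _ ≤ cfDigit ρ (n + 1) * qDen ρ (n + 1) + qDen ρ n
    have := (digit_eq ρ hirr hmem (n+1)).2
    nlinarith

lemma cf_det (ρ : ℝ) (n : ℕ) :
    (pNum ρ (n+1) : ℤ) * qDen ρ n - pNum ρ n * qDen ρ (n+1) = (-1)^n := by
  induction n with
  | zero => simp [qDen, pNum]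
  | succ n ih =>
    show ((cfDigit ρ (n + 1) * pNum ρ (n + 1) + pNum ρ n : ℕ) : ℤ) * qDen ρ (n+1)
      - pNum ρ (n+1) * ((cfDigit ρ (n + 1) * qDen ρ (n + 1) + qDen ρ n : ℕ) : ℤ) = _
    push_cast
    rw [pow_succ, ← ih]; ring

lemma best_approx (ρ : ℝ) (hirr : Irrational ρ) (hmem : ρ ∈ Set.Ioo (0 : ℝ) 1) (n k : ℕ)
    (hk : 0 < k) (hk' : k < qDen ρ (n+1)) (r : ℤ) : |tErr ρ n| ≤ |k * ρ - r| := by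
  have hdet := cf_det ρ n
  set q : ℤ := ((qDen ρ n : ℕ) : ℤ) with hq
  set q' : ℤ := ((qDen ρ (n+1) : ℕ) : ℤ) with hq'
  set p : ℤ := ((pNum ρ n : ℕ) : ℤ) with hp
  set p' : ℤ := ((pNum ρ (n+1) : ℕ) : ℤ) with hp'
  have hqpos : 1 ≤ q := by have := (qDen_pos_le ρ hirr hmem n).1; omega
  have hq'pos : 1 ≤ q' := by have := (qDen_pos_le ρ hirr hmem (n+1)).1; omega
  set e : ℤ := (-1)^n with he
  have hee : e * e = 1 := by rw [he, ← mul_pow]; simp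
  set α : ℤ := e * (p' * k - q' * r) with hα
  set β : ℤ := e * (q * r - p * k) with hβ
  have h1 : (k : ℤ) = α * q + β * q' := by
    have : α * q + β * q' = e * (p' * q - p * q') * k := by rw [hα, hβ]; ring
    rw [this, hdet, hee]; ring
  have h2 : r = α * p + β * p' := by
    have : α * p + β * p' = e * (p' * q - p * q') * r := by rw [hα, hβ]; ring
    rw [this, hdet, hee]; ring
  have h3 : (k : ℝ) * ρ - r = α * tErr ρ n + β * tErr ρ (n+1) := by
    have h1' : (k : ℝ) = α * q + β * q' := by exact_mod_cast h1
    have h2' : (r : ℝ) = α * p + β * p' := by exact_mod_cast h2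
    rw [h1', h2']
    simp only [tErr, hq, hq', hp, hp']
    push_cast; ring
  have hα0 : α ≠ 0 := by
    intro h
    rw [h] at h1
    have h5 : (k:ℤ) < q' := by omega
    rcases lt_trichotomy β 0 with h | h | h
    · nlinarith
    · rw [h] at h1; omega
    · nlinarith
  have hx := (gauss_mem ρ hirr hmem (n+1)).2
  rw [h3, tErr_succ ρ hirr hmem]
  have : (α : ℝ) * tErr ρ n + β * (-gaussMap^[n + 1] ρ * tErr ρ n)
    = (α - β * gaussMap^[n + 1] ρ) * tErr ρ n := by ring
  rw [this, abs_mul]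
  refine le_mul_of_one_le_left (abs_nonneg _) ?_
  set xx := gaussMap^[n + 1] ρ
  have h5 : (k:ℤ) < q' := by omega
  rcases lt_or_gt_of_ne hα0 with h | h
  · have hb : 0 ≤ β := by
      by_contra hb; push Not at hb; nlinarith
    have h6 : (α : ℝ) ≤ -1 := by exact_mod_cast (by omega : α ≤ -1)
    have h7 : (0 : ℝ) ≤ β := by exact_mod_cast hb
    rw [le_abs]; right
    nlinarith [hx.1]
  · have hb : β ≤ 0 := by
      by_contra hb; push Not at hb; nlinarith
    have h6 : (1 : ℝ) ≤ α := by exact_mod_cast (by omega : 1 ≤ α)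
    have h7 : (β : ℝ) ≤ 0 := by exact_mod_cast hb
    rw [le_abs]; left
    nlinarith [hx.1]


structure Core (F : ℝ → ℝ) (ρ : ℝ) : Prop where
  mono : StrictMono F
  cont : Continuous F
  deg1 : ∀ x, F (x + 1) = F x + 1
  irr : Irrational ρ
  order : ∀ (k l : ℕ) (p r : ℤ), k * ρ + p < l * ρ + r → ∀ x, F^[k] x + p < F^[l] x + r

lemma core_of_rot (F : ℝ → ℝ) (ρ : ℝ) (hm : StrictMono F) (hc : Continuous F)
    (hd : ∀ x, F (x + 1) = F x + 1) (hirr : Irrational ρ) (hrot : HasRotationNumber F ρ) :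
    Core F ρ := by
  refine ⟨hm, hc, hd, hirr, ?_⟩
  let f : CircleDeg1Lift := ⟨⟨F, hm.monotone⟩, hd⟩
  have hf : ⇑f = F := rfl
  have hτ : f.translationNumber = ρ := by
    apply CircleDeg1Lift.translationNumber_eq_of_tendsto₀
    simpa [hf, HasRotationNumber] using hrot
  intro k l p r h x
  rcases le_total k l with hkl | hkl
  · obtain ⟨m, rfl⟩ := Nat.exists_eq_add_of_le hkl
    have h1 : ((p - r : ℤ) : ℝ) < (f ^ m).translationNumber := by
      rw [CircleDeg1Lift.translationNumber_pow, hτ]; push_cast at h ⊢; linarith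
    have h2 := CircleDeg1Lift.lt_map_of_int_lt_translationNumber _ h1 (F^[k] x)
    rw [CircleDeg1Lift.coe_pow, hf, ← Function.iterate_add_apply, add_comm m k] at h2
    push_cast at h2; linarith
  · obtain ⟨m, rfl⟩ := Nat.exists_eq_add_of_le hkl
    have h1 : (f ^ m).translationNumber < ((r - p : ℤ) : ℝ) := by
      rw [CircleDeg1Lift.translationNumber_pow, hτ]; push_cast at h ⊢; linarith
    have h2 := CircleDeg1Lift.map_lt_of_translationNumber_lt_int _ h1 (F^[l] x)
    rw [CircleDeg1Lift.coe_pow, hf, ← Function.iterate_add_apply, add_comm m l] at h2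
    push_cast at h2; linarith

namespace Core
variable {F : ℝ → ℝ} {ρ : ℝ} (h : Core F ρ)

lemma add_int (h : Core F ρ) (x : ℝ) (p : ℤ) : F (x + p) = F x + p := by
  let f : CircleDeg1Lift := ⟨⟨F, h.mono.monotone⟩, h.deg1⟩
  exact CircleDeg1Lift.map_add_int f x p

lemma iter_add_int (h : Core F ρ) (m : ℕ) (x : ℝ) (p : ℤ) : F^[m] (x + p) = F^[m] x + p := by
  induction m generalizing x with
  | zero => rfl
  | succ m ih => simp only [Function.iterate_succ_apply]; rw [h.add_int, ih]

lemma iter_sub_int (h : Core F ρ) (m : ℕ) (x : ℝ) (p : ℤ) : F^[m] (x - p) = F^[m] x - p := by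
  have := h.iter_add_int m x (-p)
  push_cast at this
  simpa [sub_eq_add_neg] using this

lemma iter_mono (h : Core F ρ) (m : ℕ) : StrictMono F^[m] := h.mono.iterate m

lemma iter_cont (h : Core F ρ) (m : ℕ) : Continuous F^[m] := h.cont.iterate m

lemma order_le (h : Core F ρ) (k l : ℕ) (p r : ℤ) (hle : k * ρ + p ≤ l * ρ + r) (x : ℝ) :
    F^[k] x + p ≤ F^[l] x + r := by
  rcases hle.lt_or_eq with hlt | heq
  · exact (h.order k l p r hlt x).le
  · have h1 : ((k:ℤ) - l : ℤ) * ρ = ((r - p : ℤ) : ℝ) := by push_cast; linarith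
    have hkl : (k : ℤ) - l = 0 := by
      by_contra hne
      exact ((h.irr.intCast_mul hne).ne_int _) h1
    have hpr : r - p = 0 := by
      rw [hkl] at h1
      have : ((r - p : ℤ) : ℝ) = 0 := by rw [← h1]; simp
      exact_mod_cast this
    have hk : k = l := by omega
    have hp : p = r := by omega
    subst hk hp; rfl

lemma iter_surj (h : Core F ρ) (m : ℕ) : Function.Surjective F^[m] := by
  have hb : ∀ x, F^[m] x < x + (m * |F 0| + 2 * m + 2) ∧ x - (m * |F 0| + 2 * m + 2) < F^[m] x := by
    induction m with
    | zero => intro x; simp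
    | succ m ih =>
      intro x
      rw [Function.iterate_succ_apply']
      set y := F^[m] x
      have h1 := h.add_int (Int.fract y) ⌊y⌋
      rw [Int.fract_add_floor] at h1
      have h2 : F (Int.fract y) ≤ F 0 + 1 := by
        rw [← h.deg1 0]; exact h.mono.monotone (by linarith [Int.fract_lt_one y])
      have h3 : F 0 ≤ F (Int.fract y) := h.mono.monotone (Int.fract_nonneg y)
      have h4 := Int.floor_le y
      have h5 := Int.lt_floor_add_one y
      obtain ⟨h6, h7⟩ := ih x
      have := le_abs_self (F 0)
      have := neg_abs_le (F 0)
      push_cast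
      constructor <;> nlinarith
  intro y
  set K : ℝ := m * |F 0| + 2 * m + 2 with hK
  have hK0 : 0 ≤ K := by positivity
  have := intermediate_value_Icc (a := y - K) (b := y + K) (by linarith)
    (h.iter_cont m).continuousOn
  obtain ⟨x, _, hx⟩ := this (show y ∈ _ from ⟨by linarith [(hb (y - K)).1], by linarith [(hb (y+K)).2]⟩)
  exact ⟨x, hx⟩

end Core

/-- A pair of consecutive return times, the first moving to the right. -/
structure RetPair (ρ : ℝ) (q q' : ℕ) (p p' : ℤ) : Prop where
  q_pos : 1 ≤ q
  q_le : q ≤ q'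
  pos : 0 < q * ρ - p
  lt_one : q * ρ - p < 1
  neg : q' * ρ - p' < 0
  sum_pos : 0 < (q * ρ - p) + (q' * ρ - p')
  ba : ∀ k : ℕ, 0 < k → k < q' → ∀ r : ℤ, q * ρ - p ≤ |k * ρ - r|

/-- the return map -/
def gMap (F : ℝ → ℝ) (q : ℕ) (p : ℤ) (x : ℝ) : ℝ := F^[q] x - p

section core
variable {F : ℝ → ℝ} {ρ : ℝ} {q q' : ℕ} {p p' : ℤ}

lemma gMap_iter (h : Core F ρ) (m : ℕ) (x : ℝ) : F^[m] (gMap F q p x) = gMap F q p (F^[m] x) := by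
  unfold gMap
  rw [h.iter_sub_int, ← Function.iterate_add_apply, ← Function.iterate_add_apply, add_comm]

lemma gMap_add_int (h : Core F ρ) (x : ℝ) (r : ℤ) : gMap F q p (x + r) = gMap F q p x + r := by
  unfold gMap
  rw [h.iter_add_int]; ring

lemma gMap_mono (h : Core F ρ) : StrictMono (gMap F q p) := by
  intro x y hxy
  unfold gMap
  linarith [h.iter_mono q hxy]

lemma gMap_cont (h : Core F ρ) : Continuous (gMap F q p) := by
  unfold gMap
  exact (h.iter_cont q).sub continuous_const

lemma gMap_surj (h : Core F ρ) : Function.Surjective (gMap F q p) := by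
  intro y
  obtain ⟨x, hx⟩ := h.iter_surj q (y + p)
  exact ⟨x, by unfold gMap; rw [hx]; ring⟩

lemma lt_gMap (h : Core F ρ) (hr : RetPair ρ q q' p p') (x : ℝ) : x < gMap F q p x := by
  have := h.order 0 q 0 (-p) (by have := hr.pos; push_cast; linarith) x
  simp at this
  unfold gMap; linarith

lemma gMap_lt_add_one (h : Core F ρ) (hr : RetPair ρ q q' p p') (x : ℝ) :
    gMap F q p x < x + 1 := by
  have := h.order q 0 (-p) 1 (by have := hr.lt_one; push_cast; linarith) x
  simp at this
  unfold gMap; linarith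

/-- sum of a monotone function over disjoint intervals -/
lemma sum_disjoint {ι : Type*} (s : Finset ι) (a b : ι → ℝ) (Φ : ℝ → ℝ) (hΦ : Monotone Φ)
    (A : ℝ) : ∀ B : ℝ, A ≤ B → (∀ j ∈ s, A ≤ a j ∧ a j < b j ∧ b j ≤ B) →
    (∀ j ∈ s, ∀ l ∈ s, j ≠ l → b j ≤ a l ∨ b l ≤ a j) →
    ∑ j ∈ s, (Φ (b j) - Φ (a j)) ≤ Φ B - Φ A := by
  classical
  induction s using Finset.induction_on_max_value a with
  | empty => intro B hAB _ _; simp; exact hΦ hAB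
  | insert i s his hmax ih =>
    intro B hAB h1 h2
    rw [Finset.sum_insert his]
    obtain ⟨h3, h4, h5⟩ := h1 i (Finset.mem_insert_self _ _)
    have := ih (a i) h3 (fun j hj => by
      obtain ⟨h6, h7, h8⟩ := h1 j (Finset.mem_insert_of_mem hj)
      refine ⟨h6, h7, ?_⟩
      have hne : j ≠ i := fun e => his (e ▸ hj)
      rcases h2 j (Finset.mem_insert_of_mem hj) i (Finset.mem_insert_self _ _) hne with h9 | h9
      · exact h9
      · have := hmax j hj; linarith)
      (fun j hj l hl hne => h2 j (Finset.mem_insert_of_mem hj) l (Finset.mem_insert_of_mem hl) hne)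
    have := hΦ h5
    linarith

lemma sum_int_shift {Φ : ℝ → ℝ} {κ : ℝ} (hp : ∀ x, Φ (x + 1) = Φ x + κ) (x : ℝ) (r : ℤ) :
    Φ (x + r) = Φ x + r * κ := by
  induction r using Int.induction_on with
  | zero => simp
  | succ i ih =>
    push_cast at ih ⊢
    rw [← add_assoc, hp, ih]; ring
  | pred i ih =>
    push_cast at ih ⊢
    have := hp (x + (-i - 1))
    rw [show x + (-(i:ℝ) - 1) + 1 = x + -i by ring, ih] at this
    linarith

lemma sum_one (h : Core F ρ) (hr : RetPair ρ q q' p p') {Φ : ℝ → ℝ} {κ : ℝ} (hΦ : Monotone Φ)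
    (hp : ∀ x, Φ (x + 1) = Φ x + κ) (y : ℝ) :
    ∑ j ∈ Finset.range q', (Φ (F^[j] (gMap F q p y)) - Φ (F^[j] y)) ≤ 2 * κ := by
  set e : ℕ → ℤ := fun j => -⌊F^[j] y⌋ with he
  have key := sum_disjoint (Finset.range q') (fun j => F^[j] y + e j)
    (fun j => F^[j] (gMap F q p y) + e j) Φ hΦ 0 2 (by norm_num) ?_ ?_
  · have h2 : Φ 2 = Φ 0 + 2 * κ := by
      have := sum_int_shift hp 0 2
      simpa using this
    rw [h2] at key
    calc _ = ∑ j ∈ Finset.range q', (Φ (F^[j] (gMap F q p y) + e j) - Φ (F^[j] y + e j)) := by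
            apply Finset.sum_congr rfl
            intro j _
            rw [sum_int_shift hp, sum_int_shift hp]; ring
      _ ≤ _ := by linarith
  · intro j _
    have h1 := Int.floor_le (F^[j] y)
    have h2 := Int.lt_floor_add_one (F^[j] y)
    have h3 := lt_gMap h hr (F^[j] y)
    have h4 := gMap_lt_add_one h hr (F^[j] y)
    simp only [gMap_iter h, he]
    push_cast
    refine ⟨by linarith, by linarith, by linarith⟩
  · have main : ∀ j l : ℕ, j < l → l < q' → (F^[j] (gMap F q p y) + e j ≤ F^[l] y + e l ∨
        F^[l] (gMap F q p y) + e l ≤ F^[j] y + e j) := by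
      intro j l hjl hl
      obtain ⟨k, rfl⟩ := Nat.exists_eq_add_of_lt hjl
      have hba := hr.ba (k+1) (by omega) (by omega) (e j - e (j+k+1))
      rw [le_abs] at hba
      simp only [gMap, h.iter_sub_int, ← Function.iterate_add_apply]
      rcases hba with hba | hba
      · left
        have := h.order_le (j+q) (j+k+1) (e j - p) (e (j+k+1)) (by push_cast at hba ⊢; linarith) y
        push_cast at this; linarith
      · right
        have := h.order_le (j+k+1+q) j (e (j+k+1) - p) (e j) (by push_cast at hba ⊢; linarith) y
        push_cast at this; linarith
    intro j hj l hl hne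
    rcases lt_or_gt_of_ne hne with h1 | h1
    · exact main j l h1 (Finset.mem_range.1 hl)
    · exact (main l j h1 (Finset.mem_range.1 hj)).symm

/-- cross ratio -/
def cr (a b c d : ℝ) : ℝ := (b - a) * (d - c) / ((c - a) * (d - b))

structure CRB (F Φ : ℝ → ℝ) (κ : ℝ) : Prop where
  mono : Monotone Φ
  per : ∀ x, Φ (x + 1) = Φ x + κ
  cr_le : ∀ a b c d, a < b → b < c → c < d →
    cr (F a) (F b) (F c) (F d) ≤ Real.exp (Φ d - Φ a) * cr a b c d

lemma cr_iter (h : Core F ρ) {Φ : ℝ → ℝ} {κ : ℝ} (hb : CRB F Φ κ) (m : ℕ) (a b c d : ℝ)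
    (hab : a < b) (hbc : b < c) (hcd : c < d) :
    cr (F^[m] a) (F^[m] b) (F^[m] c) (F^[m] d) ≤
      Real.exp (∑ j ∈ Finset.range m, (Φ (F^[j] d) - Φ (F^[j] a))) * cr a b c d := by
  induction m with
  | zero => simp
  | succ m ih =>
    simp only [Function.iterate_succ_apply']
    refine (hb.cr_le _ _ _ _ (h.iter_mono m hab) (h.iter_mono m hbc) (h.iter_mono m hcd)).trans ?_
    rw [Finset.sum_range_succ, add_comm, Real.exp_add, mul_assoc]
    exact mul_le_mul_of_nonneg_left ih (Real.exp_pos _).le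

lemma sum_two (h : Core F ρ) (hr : RetPair ρ q q' p p') {Φ : ℝ → ℝ} {κ : ℝ} (hΦ : Monotone Φ)
    (hp : ∀ x, Φ (x + 1) = Φ x + κ) (y : ℝ) (m : ℕ) (hm : m ≤ q' + q') :
    ∑ j ∈ Finset.range m, (Φ (F^[j] (gMap F q p y)) - Φ (F^[j] y)) ≤ 4 * κ := by
  have h0 : ∑ j ∈ Finset.range m, (Φ (F^[j] (gMap F q p y)) - Φ (F^[j] y)) ≤
      ∑ j ∈ Finset.range (q' + q'), (Φ (F^[j] (gMap F q p y)) - Φ (F^[j] y)) := by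
    apply Finset.sum_le_sum_of_subset_of_nonneg
    · exact Finset.range_subset_range.2 hm
    · intro j _ _
      have := hΦ ((h.iter_mono j (lt_gMap h hr y)).le)
      linarith
  rw [Finset.sum_range_add] at h0
  have h1 := sum_one h hr hΦ hp y
  have h2 := sum_one h hr hΦ hp (F^[q'] y)
  have h3 : ∀ j, F^[q' + j] (gMap F q p y) = F^[j] (gMap F q p (F^[q'] y)) := by
    intro j
    rw [add_comm, Function.iterate_add_apply, gMap_iter h]
  have h4 : ∀ j, F^[q' + j] y = F^[j] (F^[q'] y) := by
    intro j
    rw [add_comm, Function.iterate_add_apply]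
  simp only [h3, h4] at h0
  linarith

lemma cr_iter' (h : Core F ρ) (hr : RetPair ρ q q' p p') {Φ : ℝ → ℝ} {κ : ℝ} (hb : CRB F Φ κ)
    (m : ℕ) (hm : m ≤ q' + q') (y a b c d : ℝ) (hya : y ≤ a)
    (hab : a < b) (hbc : b < c) (hcd : c < d)
    (hd : d ≤ gMap F q p (gMap F q p (gMap F q p y))) :
    cr (F^[m] a) (F^[m] b) (F^[m] c) (F^[m] d) ≤ Real.exp (12 * κ) * cr a b c d := by
  refine (cr_iter h hb m a b c d hab hbc hcd).trans ?_
  apply mul_le_mul_of_nonneg_right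
  · apply Real.exp_le_exp.2
    set g := gMap F q p
    have h1 := sum_two h hr hb.mono hb.per y m hm
    have h2 := sum_two h hr hb.mono hb.per (g y) m hm
    have h3 := sum_two h hr hb.mono hb.per (g (g y)) m hm
    have : ∑ j ∈ Finset.range m, (Φ (F^[j] d) - Φ (F^[j] a)) ≤
      ∑ j ∈ Finset.range m, ((Φ (F^[j] (g y)) - Φ (F^[j] y)) + (Φ (F^[j] (g (g y))) - Φ (F^[j] (g y)))
        + (Φ (F^[j] (g (g (g y)))) - Φ (F^[j] (g (g y))))) := by
      apply Finset.sum_le_sum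
      intro j _
      have := hb.mono ((h.iter_mono j).monotone hya)
      have := hb.mono ((h.iter_mono j).monotone hd)
      linarith
    rw [Finset.sum_add_distrib, Finset.sum_add_distrib] at this
    linarith
  · unfold cr
    apply div_nonneg <;> apply mul_nonneg <;> linarith

end core

section core
variable {F : ℝ → ℝ} {ρ : ℝ} {q q' : ℕ} {p p' : ℤ}

lemma covering (h : Core F ρ) (hr : RetPair ρ q q' p p') (w x : ℝ) :
    ∃ (j : ℕ) (r : ℤ), j ≤ q' + q' ∧ w + r ≤ F^[j] x ∧ F^[j] x < gMap F q p w + r := by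
  set Q := q + q' with hQ
  obtain ⟨w0, hw0⟩ := h.iter_surj Q w
  have hqp := hr.q_pos
  have hql := hr.q_le
  obtain ⟨l, hl, hmax⟩ := Finset.exists_max_image (Finset.Ioc 0 Q)
    (fun l => F^[l] w0 + ⌊x - F^[l] w0⌋) ⟨1, by simp; omega⟩
  have hmax' : ∀ (k : ℕ) (r : ℤ), 0 < k → k ≤ Q →
      F^[l] w0 + ⌊x - F^[l] w0⌋ < F^[k] w0 + r → x < F^[k] w0 + r := by
    intro k r hk hk' hlt
    by_contra hcon
    push Not at hcon
    have h1 : r ≤ ⌊x - F^[k] w0⌋ := by rw [Int.le_floor]; linarith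
    have h2 := hmax k (by simp; omega)
    have h3 : (r : ℝ) ≤ ⌊x - F^[k] w0⌋ := by exact_mod_cast h1
    linarith
  simp only [Finset.mem_Ioc] at hl
  set r := ⌊x - F^[l] w0⌋ with hrr
  have hu : F^[l] w0 + r ≤ x := by
    have := Int.floor_le (x - F^[l] w0); rw [← hrr] at this; linarith
  have hgu : x < F^[l + q] w0 + ((r - p : ℤ) : ℝ) := by
    have hord : F^[l] w0 + r < F^[l + q] w0 + ((r - p : ℤ) : ℝ) :=
      h.order _ _ _ _ (by have := hr.pos; push_cast; linarith) w0
    by_cases hlq : l + q ≤ Q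
    · exact hmax' _ _ (by omega) hlq hord
    · obtain ⟨l', rfl⟩ : ∃ l', l = l' + q' := ⟨l - q', by omega⟩
      have h1 : F^[l' + q'] w0 + r < F^[l'] w0 + ((r + p' : ℤ) : ℝ) :=
        h.order _ _ _ _ (by have := hr.neg; push_cast; linarith) w0
      have h2 := hmax' l' (r + p') (by omega) (by omega) h1
      have h3 : F^[l'] w0 + ((r + p' : ℤ) : ℝ) < F^[l' + q' + q] w0 + ((r - p : ℤ) : ℝ) :=
        h.order _ _ _ _ (by have := hr.sum_pos; push_cast; linarith) w0
      linarith
  refine ⟨Q - l, r, by omega, ?_, ?_⟩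
  · have := (h.iter_mono (Q - l)).monotone hu
    rw [h.iter_add_int, ← Function.iterate_add_apply, Nat.sub_add_cancel hl.2, hw0] at this
    exact this
  · have := h.iter_mono (Q - l) hgu
    rw [h.iter_add_int, ← Function.iterate_add_apply, ← add_assoc, Nat.sub_add_cancel hl.2,
      add_comm Q q, Function.iterate_add_apply, hw0] at this
    unfold gMap
    push_cast at this
    linarith

lemma exists_min (h : Core F ρ) : ∃ z, ∀ x, gMap F q p z - z ≤ gMap F q p x - x := by
  have hc : Continuous fun x => gMap F q p x - x := (gMap_cont h).sub continuous_id
  obtain ⟨z, _, hz⟩ := isCompact_Icc.exists_isMinOn (s := Icc (0:ℝ) 1) ⟨0, by simp⟩ hc.continuousOn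
  refine ⟨z, fun x => ?_⟩
  have h1 := hz (show Int.fract x ∈ Icc (0:ℝ) 1 from ⟨Int.fract_nonneg x, (Int.fract_lt_one x).le⟩)
  simp only [mem_ofPred_eq] at h1
  have h2 := gMap_add_int (q := q) (p := p) h (Int.fract x) ⌊x⌋
  rw [Int.fract_add_floor] at h2
  have h3 := Int.fract_add_floor x
  linarith

lemma cr_lower {a b c d m K : ℝ} (hm : 0 < m) (hL : m ≤ b - a) (hR : m ≤ d - c) (hbc : b < c)
    (hM : c - b ≤ K * m) : 1 / (1 + K) ^ 2 ≤ cr a b c d := by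
  have hK : 0 < K := by
    by_contra hh; push Not at hh; nlinarith
  have h1 : 1 / (1 + K) ≤ (b - a) / (c - a) := by
    rw [div_le_div_iff₀ (by linarith) (by linarith)]
    nlinarith
  have h2 : 1 / (1 + K) ≤ (d - c) / (d - b) := by
    rw [div_le_div_iff₀ (by linarith) (by linarith)]
    nlinarith
  have h3 : cr a b c d = ((b - a) / (c - a)) * ((d - c) / (d - b)) := by
    unfold cr; rw [div_mul_div_comm]
  rw [h3]
  calc 1 / (1 + K)^2 = (1 / (1+K)) * (1 / (1 + K)) := by field_simp
    _ ≤ _ := mul_le_mul h1 h2 (by positivity) (by apply div_nonneg <;> linarith)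

lemma cr_upper_left {a b c d t : ℝ} (ht : 0 < t) (hab : a < b) (hbc : b < c) (hcd : c < d)
    (h : 1 / t ≤ cr a b c d) : c - b ≤ t * (b - a) ∧ c - b ≤ t * (d - c) := by
  have h3 : cr a b c d = ((b - a) / (c - a)) * ((d - c) / (d - b)) := by
    unfold cr; rw [div_mul_div_comm]
  have h4 : (b - a) / (c - a) ≤ 1 := by rw [div_le_one (by linarith)]; linarith
  have h5 : (d - c) / (d - b) ≤ 1 := by rw [div_le_one (by linarith)]; linarith
  have h6 : 0 < (b - a) / (c - a) := by apply div_pos <;> linarith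
  have h7 : 0 < (d - c) / (d - b) := by apply div_pos <;> linarith
  have h8 : 1 / t ≤ (b - a) / (c - a) := by rw [h3] at h; nlinarith
  have h9 : 1 / t ≤ (d - c) / (d - b) := by rw [h3] at h; nlinarith
  rw [div_le_div_iff₀ ht (by linarith)] at h8 h9
  constructor <;> linarith

lemma cr_sub_int (a b c d s : ℝ) : cr (a - s) (b - s) (c - s) (d - s) = cr a b c d := by
  unfold cr; congr 1 <;> ring

/-- the Herman–Swiatek bound -/
lemma real_bounds (F : ℝ → ℝ) (ρ κ : ℝ) (Φ : ℝ → ℝ) (h : Core F ρ) (hb : CRB F Φ κ) :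
    ∃ C : ℝ, 0 < C ∧ ∀ (q q' : ℕ) (p p' : ℤ), RetPair ρ q q' p p' → ∀ x,
      gMap F q p x - x ≤ C * (gMap F q p (gMap F q p x) - gMap F q p x) ∧
      gMap F q p (gMap F q p x) - gMap F q p x ≤ C * (gMap F q p x - x) := by
  set B := Real.exp (12 * κ) with hB
  have hBpos : 0 < B := Real.exp_pos _
  refine ⟨(1 + (4 * B + 1)) ^ 2 * B, by positivity, ?_⟩
  intro q q' p p' hr
  set g := gMap F q p with hg
  have hlt : ∀ x, x < g x := lt_gMap h hr
  have hgm : StrictMono g := gMap_mono h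
  obtain ⟨z, hz⟩ := exists_min (q := q) (p := p) h
  rw [← hg] at hz
  have hsurj : Function.Surjective g := gMap_surj h
  obtain ⟨w, rfl⟩ := hsurj z
  obtain ⟨v, rfl⟩ := hsurj w
  set m0 := g (g (g v)) - g (g v) with hm0
  have hm0pos : 0 < m0 := by have := hlt (g (g v)); linarith
  -- first step
  have hw : g (g v) - g v ≤ 4 * B * m0 := by
    have h1 := cr_iter' h hr hb q (by have := hr.q_le; omega) v v (g v) (g (g v)) (g (g (g v)))
      le_rfl (hlt _) (hlt _) (hlt _) le_rfl
    rw [← cr_sub_int _ _ _ _ (p:ℝ)] at h1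
    change cr (g v) (g (g v)) (g (g (g v))) (g (g (g (g v)))) ≤ _ at h1
    have h2 := cr_lower (a := g v) (b := g (g v)) (c := g (g (g v))) (d := g (g (g (g v))))
      (m := m0) (K := 1) hm0pos (hz _) (hz _) (hlt _) (by linarith)
    have h3 : 1 / (4 * B) ≤ cr v (g v) (g (g v)) (g (g (g v))) := by
      rw [div_le_iff₀ (by positivity)]
      norm_num at h2
      linarith
    have := (cr_upper_left (by positivity) (hlt _) (hlt _) (hlt _) h3).2
    linarith
  have main : ∀ x0, g (g x0) - g x0 ≤ (1 + (4 * B + 1)) ^ 2 * B * (g x0 - x0) ∧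
      g (g x0) - g x0 ≤ (1 + (4 * B + 1)) ^ 2 * B * (g (g (g x0)) - g (g x0)) := by
    intro x0
    obtain ⟨j, r, hj, hj1, hj2⟩ := covering h hr (g v) (g x0)
    rw [← hg] at hj2
    have hcomm : ∀ y, F^[j] (g y) = g (F^[j] y) := fun y => gMap_iter h j y
    have h1 := cr_iter' h hr hb j hj x0 x0 (g x0) (g (g x0)) (g (g (g x0)))
      le_rfl (hlt _) (hlt _) (hlt _) le_rfl
    have h2 := cr_lower (a := F^[j] x0) (b := F^[j] (g x0)) (c := F^[j] (g (g x0)))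
      (d := F^[j] (g (g (g x0)))) (m := m0) (K := 4 * B + 1) hm0pos
      (by rw [hcomm]; exact hz _) (by rw [hcomm (g (g x0))]; exact hz _)
      (h.iter_mono j (hlt _)) (by
        rw [hcomm (g x0)]
        have := hgm.monotone hj2.le
        have h5 := gMap_add_int (q := q) (p := p) h (g (g v)) r
        rw [← hg] at h5
        rw [h5] at this
        linarith)
    have h3 : 1 / ((1 + (4 * B + 1)) ^ 2 * B) ≤ cr x0 (g x0) (g (g x0)) (g (g (g x0))) := by
      rw [← div_div, div_le_iff₀ hBpos]
      linarith
    exact cr_upper_left (by positivity) (hlt _) (hlt _) (hlt _) h3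
  intro x
  obtain ⟨x0, rfl⟩ := gMap_surj (q := q) (p := p) h x
  exact ⟨(main x0).2, (main (gMap F q p x0)).1⟩

/-- derivative bound -/
lemma deriv_bound (F : ℝ → ℝ) (ρ κ : ℝ) (Φ : ℝ → ℝ) (h : Core F ρ) (hb : CRB F Φ κ) :
    ∃ C : ℝ, 0 < C ∧ ∀ (q q' : ℕ) (p p' : ℤ), RetPair ρ q q' p p' → ∀ y x D : ℝ, ∀ m ≤ q',
      y ≤ x → x ≤ gMap F q p y → HasDerivAt F^[m] D x →
      D * (gMap F q p y - y) ≤ C * (gMap F q p (F^[m] y) - F^[m] y) := by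
  obtain ⟨C, hC, hrb⟩ := real_bounds F ρ κ Φ h hb
  set B := Real.exp (12 * κ) with hB
  have hBpos : 0 < B := Real.exp_pos _
  refine ⟨2 * B * (1 + C), by positivity, ?_⟩
  intro q q' p p' hr y x D m hm hyx hxy hD
  have hrb := hrb q q' p p' hr
  set g := gMap F q p with hg
  have hlt : ∀ x, x < g x := lt_gMap h hr
  have hgm : StrictMono g := gMap_mono h
  have hcomm : ∀ y, F^[m] (g y) = g (F^[m] y) := fun y => gMap_iter h m y
  have hFm := h.iter_mono m
  set f := F^[m] with hf
  have hI := hlt (f y)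
  have hI0 := hlt y
  -- a final algebra step
  have fin : ∀ M M' R' T' R T : ℝ, 0 < M → 0 < M' → 0 < R' → 0 < T' → 0 < R → R ≤ T →
      (g y - y) ≤ 2 * M → M' ≤ g (f y) - f y → T' ≤ (1 + C) * R' →
      D * (R' / (M' * T')) ≤ B * (R / (M * T)) →
      D * (g y - y) ≤ 2 * B * (1 + C) * (g (f y) - f y) := by
    intro M M' R' T' R T hM hM' hR' hT' hR hRT h1 h2 h3 h4
    have hT : 0 < T := by linarith
    rcases le_total D 0 with hD0 | hD0
    · have h5 : D * (g y - y) ≤ 0 := mul_nonpos_of_nonpos_of_nonneg hD0 (by linarith)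
      have h6 : 0 ≤ 2 * B * (1 + C) * (g (f y) - f y) := by
        apply mul_nonneg (by positivity); linarith
      linarith
    · have h5 : R / (M * T) ≤ 1 / M := by
        rw [div_le_div_iff₀ (by positivity) hM]; nlinarith
      have h6 : D * (R' / (M' * T')) ≤ B * (1 / M) :=
        h4.trans (mul_le_mul_of_nonneg_left h5 hBpos.le)
      have h7 : 1 / (M' * (1 + C)) ≤ R' / (M' * T') := by
        rw [div_le_div_iff₀ (by positivity) (by positivity)]; nlinarith
      have h8 : D * (1 / (M' * (1 + C))) ≤ B * (1 / M) :=
        (mul_le_mul_of_nonneg_left h7 hD0).trans h6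
      rw [mul_one_div, mul_one_div, div_le_div_iff₀ (by positivity) hM] at h8
      calc D * (g y - y) ≤ D * (2 * M) := mul_le_mul_of_nonneg_left h1 hD0
        _ = 2 * (D * M) := by ring
        _ ≤ 2 * (B * (M' * (1 + C))) := by linarith
        _ = 2 * B * (1 + C) * M' := by ring
        _ ≤ _ := mul_le_mul_of_nonneg_left h2 (by positivity)
  rcases le_total ((g y - y)) (2 * (g y - x)) with hcase | hcase
  · -- to the right
    have hxg : x < g y := by linarith
    have hgg := hlt (g y)
    have hlim : D * ((f (g (g y)) - f (g y)) / ((f (g y) - f x) * (f (g (g y)) - f x))) ≤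
        B * ((g (g y) - g y) / ((g y - x) * (g (g y) - x))) := by
      have hslope := hasDerivAt_iff_tendsto_slope.1 hD
      have hslope : Tendsto (slope f x) (nhdsWithin x (Ioi x)) (nhds D) :=
        hslope.mono_left (nhdsWithin_mono x (fun t ht => ne_of_gt ht))
      have hfc : Tendsto f (nhdsWithin x (Ioi x)) (nhds (f x)) :=
        ((h.iter_cont m).tendsto x).mono_left nhdsWithin_le_nhds
      have hid : Tendsto (fun t : ℝ => t) (nhdsWithin x (Ioi x)) (nhds x) :=
        tendsto_id.mono_left nhdsWithin_le_nhds
      have e1 : 0 < f (g y) - f x := sub_pos.2 (hFm hxg)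
      have e2 : 0 < f (g (g y)) - f x := sub_pos.2 (hFm (by linarith))
      have e3 : 0 < g y - x := by linarith
      have e4 : 0 < g (g y) - x := by linarith
      refine le_of_tendsto_of_tendsto (b := nhdsWithin x (Ioi x))
        (f := fun t => slope f x t * ((f (g (g y)) - f (g y)) / ((f (g y) - f x) * (f (g (g y)) - f t))))
        (g := fun t => B * ((g (g y) - g y) / ((g y - x) * (g (g y) - t)))) ?_ ?_ ?_
      · refine hslope.mul (Tendsto.div tendsto_const_nhds ?_ (by positivity))
        exact tendsto_const_nhds.mul (tendsto_const_nhds.sub hfc)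
      · refine tendsto_const_nhds.mul (Tendsto.div tendsto_const_nhds ?_ (by positivity))
        exact tendsto_const_nhds.mul (tendsto_const_nhds.sub hid)
      · filter_upwards [Ioo_mem_nhdsGT hxg] with t ht
        have h1 := cr_iter' h hr hb m (by omega) y x t (g y) (g (g y)) hyx ht.1 ht.2 hgg
          (hlt _).le
        have e5 : 0 < t - x := by linarith [ht.1]
        have h2 : slope f x t * ((f (g (g y)) - f (g y)) / ((f (g y) - f x) * (f (g (g y)) - f t)))
          = cr (f x) (f t) (f (g y)) (f (g (g y))) / (t - x) := by
          rw [slope_def_field]; unfold cr; ring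
        have h3 : B * ((g (g y) - g y) / ((g y - x) * (g (g y) - t))) = 
          B * cr x t (g y) (g (g y)) / (t - x) := by
          have e6 : g (g y) - t ≠ 0 := by have := ht.2; linarith
          unfold cr; field_simp
        simp only [h2, h3]
        exact div_le_div_of_nonneg_right h1 e5.le
    have hk := (hrb (f y)).1
    rw [← hcomm, ← hcomm] at hk
    refine fin _ _ _ _ _ _ ?_ ?_ ?_ ?_ ?_ ?_ ?_ ?_ ?_ hlim
    · linarith
    · exact sub_pos.2 (hFm hxg)
    · exact sub_pos.2 (hFm hgg)
    · exact sub_pos.2 (hFm (by linarith))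
    · linarith
    · linarith
    · linarith
    · rw [← hcomm]; linarith [hFm.monotone hyx]
    · have := hFm.monotone hyx
      linarith
  · -- to the left
    have hxg : y < x := by linarith
    have hsurj : Function.Surjective g := gMap_surj h
    obtain ⟨v, rfl⟩ := hsurj y
    have hgg := hlt v
    have hlim : D * ((f (g v) - f v) / ((f x - f (g v)) * (f x - f v))) ≤
        B * ((g v - v) / ((x - g v) * (x - v))) := by
      have hslope := hasDerivAt_iff_tendsto_slope.1 hD
      have hslope : Tendsto (slope f x) (nhdsWithin x (Iio x)) (nhds D) :=
        hslope.mono_left (nhdsWithin_mono x (fun t ht => ne_of_lt ht))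
      have hfc : Tendsto f (nhdsWithin x (Iio x)) (nhds (f x)) :=
        ((h.iter_cont m).tendsto x).mono_left nhdsWithin_le_nhds
      have hid : Tendsto (fun t : ℝ => t) (nhdsWithin x (Iio x)) (nhds x) :=
        tendsto_id.mono_left nhdsWithin_le_nhds
      have e1 : 0 < f x - f (g v) := sub_pos.2 (hFm hxg)
      have e2 : 0 < f x - f v := sub_pos.2 (hFm (by linarith))
      have e3 : 0 < x - g v := by linarith
      have e4 : 0 < x - v := by linarith
      refine le_of_tendsto_of_tendsto (b := nhdsWithin x (Iio x))
        (f := fun t => slope f x t * ((f (g v) - f v) / ((f x - f (g v)) * (f t - f v))))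
        (g := fun t => B * ((g v - v) / ((x - g v) * (t - v)))) ?_ ?_ ?_
      · refine hslope.mul (Tendsto.div tendsto_const_nhds ?_ (by positivity))
        exact tendsto_const_nhds.mul (hfc.sub tendsto_const_nhds)
      · refine tendsto_const_nhds.mul (Tendsto.div tendsto_const_nhds ?_ (by positivity))
        exact tendsto_const_nhds.mul (hid.sub tendsto_const_nhds)
      · filter_upwards [Ioo_mem_nhdsLT hxg] with t ht
        have h1 := cr_iter' h hr hb m (by omega) v v (g v) t x le_rfl hgg ht.1 ht.2
          (hxy.trans (hlt _).le)
        have e5 : 0 < x - t := by linarith [ht.2]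
        have h2 : slope f x t * ((f (g v) - f v) / ((f x - f (g v)) * (f t - f v)))
          = cr (f v) (f (g v)) (f t) (f x) / (x - t) := by
          rw [slope_def_field, ← neg_sub (f x), ← neg_sub x, neg_div_neg_eq]; unfold cr; ring
        have h3 : B * ((g v - v) / ((x - g v) * (t - v))) = 
          B * cr v (g v) t x / (x - t) := by
          have e6 : t - v ≠ 0 := by have := ht.1; linarith
          unfold cr; field_simp
        simp only [h2, h3]
        exact div_le_div_of_nonneg_right h1 e5.le
    have hk := (hrb (f v)).2
    rw [← hcomm, ← hcomm] at hk
    have hxy' := hFm.monotone hxy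
    refine fin _ _ _ _ _ _ ?_ ?_ ?_ ?_ ?_ ?_ ?_ ?_ ?_ hlim
    · linarith
    · exact sub_pos.2 (hFm hxg)
    · exact sub_pos.2 (hFm hgg)
    · exact sub_pos.2 (hFm (by linarith))
    · linarith
    · linarith
    · linarith
    · rw [← hcomm]; linarith
    · linarith
end core

lemma retPair_gen (ρ : ℝ) (hirr : Irrational ρ) (hmem : ρ ∈ Set.Ioo (0 : ℝ) 1) (n : ℕ) (σ : ℤ)
    (hσ : σ = (-1)^n) :
    RetPair (σ * ρ) (qDen ρ n) (qDen ρ (n+1)) (σ * pNum ρ n) (σ * pNum ρ (n+1)) := by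
  have s0 := tErr_sign ρ hirr hmem n
  have s1 := tErr_sign ρ hirr hmem (n+1)
  have lt1 := tErr_abs_lt_one ρ hirr hmem n
  have lt2 := tErr_abs_lt ρ hirr hmem n
  have hσr : (σ : ℝ) = (-1)^n := by rw [hσ]; push_cast; rfl
  have ha : |(σ:ℝ)| = 1 := by rw [hσr]; simp
  have hss : (σ:ℝ) * σ = 1 := by rw [← abs_mul_abs_self, ha]; norm_num
  have e0 : (qDen ρ n : ℝ) * (σ * ρ) - ((σ * pNum ρ n : ℤ) : ℝ) = |tErr ρ n| := by
    have : |tErr ρ n| = |σ * tErr ρ n| := by rw [abs_mul, ha, one_mul]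
    rw [this, hσr, abs_of_pos s0]
    unfold tErr
    push_cast [hσ]
    ring
  have e1 : (qDen ρ (n+1) : ℝ) * (σ * ρ) - ((σ * pNum ρ (n+1) : ℤ) : ℝ) = -|tErr ρ (n+1)| := by
    have : |tErr ρ (n+1)| = |(-1)^(n+1) * tErr ρ (n+1)| := by rw [abs_mul]; simp
    rw [this, abs_of_pos s1]
    unfold tErr
    push_cast [hσ]
    ring
  have p0 : 0 < |tErr ρ n| := by
    rw [abs_pos]; rintro h; rw [h] at s0; simp at s0
  have p1 : 0 < |tErr ρ (n+1)| := by
    rw [abs_pos]; rintro h; rw [h] at s1; simp at s1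
  obtain ⟨hq1, hq2⟩ := qDen_pos_le ρ hirr hmem n
  refine ⟨hq1, hq2, by rw [e0]; exact p0, by rw [e0]; exact lt1, by rw [e1]; linarith,
    by rw [e0, e1]; linarith, ?_⟩
  intro k hk hk' r
  rw [e0]
  have := best_approx ρ hirr hmem n k hk hk' (σ * r)
  have e2 : |(k:ℝ) * (σ * ρ) - r| = |k * ρ - ((σ * r : ℤ) : ℝ)| := by
    have : |(k:ℝ) * (σ * ρ) - r| = |σ * ((k:ℝ) * (σ * ρ) - r)| := by rw [abs_mul, ha, one_mul]
    rw [this]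
    congr 1
    push_cast
    linear_combination (k:ℝ) * ρ * hss
  rw [e2]; exact this

lemma retPair_abs (ρ : ℝ) (hirr : Irrational ρ) (hmem : ρ ∈ Set.Ioo (0 : ℝ) 1) (n : ℕ) (σ : ℤ)
    (hσ : σ = (-1)^n) :
    (qDen ρ n : ℝ) * (σ * ρ) - ((σ * pNum ρ n : ℤ) : ℝ) = |tErr ρ n| := by
  have s0 := tErr_sign ρ hirr hmem n
  have hσr : (σ : ℝ) = (-1)^n := by rw [hσ]; push_cast; rfl
  have ha : |(σ:ℝ)| = 1 := by rw [hσr]; simp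
  have : |tErr ρ n| = |σ * tErr ρ n| := by rw [abs_mul, ha, one_mul]
  rw [this, hσr, abs_of_pos s0]
  unfold tErr
  push_cast [hσ]
  ring

lemma tErr_half (ρ : ℝ) (hirr : Irrational ρ) (hmem : ρ ∈ Set.Ioo (0 : ℝ) 1) (n : ℕ) :
    2 * |tErr ρ (n+2)| ≤ |tErr ρ n| := by
  have h0 := tErr_succ ρ hirr hmem n
  have h1 := tErr_succ ρ hirr hmem (n+1)
  have g1 := (gauss_mem ρ hirr hmem (n+1)).2
  have g2 := (gauss_mem ρ hirr hmem (n+2)).2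
  obtain ⟨h3, h4⟩ := digit_eq ρ hirr hmem (n+1)
  have h5 : (1:ℝ) ≤ cfDigit ρ (n+1) := by exact_mod_cast h4
  set a := gaussMap^[n+1] ρ with ha
  set b := gaussMap^[n+2] ρ with hb
  have hab : a * (1 + b) ≤ 1 := by
    have : 1 + b ≤ a⁻¹ := by
      linarith
    calc a * (1 + b) ≤ a * a⁻¹ := mul_le_mul_of_nonneg_left this g1.1.le
      _ = 1 := mul_inv_cancel₀ g1.1.ne'
  have h6 : tErr ρ (n+2) = b * a * tErr ρ n := by
    have : tErr ρ (n+2) = - b * tErr ρ (n+1) := h1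
    rw [this, h0]; ring
  rw [h6, abs_mul, abs_of_pos (mul_pos g2.1 g1.1)]
  have : 2 * (b * a) ≤ 1 := by nlinarith [g1.1, g1.2, g2.1, g2.2, mul_pos g1.1 (sub_pos.2 g2.2)]
  nlinarith [abs_nonneg (tErr ρ n)]

lemma mesh (F : ℝ → ℝ) (ρ κ : ℝ) (Φ : ℝ → ℝ) (h : Core F ρ) (hb : CRB F Φ κ)
    (q q' : ℕ → ℕ) (p p' : ℕ → ℤ) (hr : ∀ k, RetPair ρ (q k) (q' k) (p k) (p' k))
    (ht : ∀ k, 2 * ((q (k+1) : ℝ) * ρ - p (k+1)) ≤ q k * ρ - p k) (ε : ℝ) (hε : 0 < ε) :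
    ∃ K, ∀ k ≥ K, ∀ x, gMap F (q k) (p k) x - x < ε := by
  obtain ⟨C, hC, hrb⟩ := real_bounds F ρ κ Φ h hb
  set g : ℕ → ℝ → ℝ := fun k => gMap F (q k) (p k) with hg
  have hlt : ∀ k x, x < g k x := fun k => lt_gMap h (hr k)
  have hgg : ∀ k x, g (k+1) (g (k+1) x) ≤ g k x := by
    intro k x
    have := h.order_le (q (k+1) + q (k+1)) (q k) (-p (k+1) - p (k+1)) (-p k)
      (by have := ht k; push_cast; linarith) x
    rw [Function.iterate_add_apply] at this
    simp only [hg, gMap]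
    rw [h.iter_sub_int]
    push_cast at this
    linarith
  have hanti : ∀ x, Antitone fun k => g k x := by
    intro x
    apply antitone_nat_of_succ_le
    intro k
    exact (hlt _ _).le.trans (hgg k x)
  have hlim : ∀ x, Tendsto (fun k => g k x) atTop (nhds x) := by
    intro x
    have hbdd : BddBelow (range fun k => g k x) := ⟨x, by rintro _ ⟨k, rfl⟩; exact (hlt k x).le⟩
    have hL := tendsto_atTop_ciInf (hanti x) hbdd
    set L := ⨅ k, g k x with hLdef
    have hLx : x ≤ L := ge_of_tendsto' hL fun k => (hlt k x).le
    have key : ∀ k, L - x ≤ C * (g k x - L) := by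
      intro k
      have hsurj : Function.Surjective (g (k+1)) := gMap_surj h
      have hmono : StrictMono (g (k+1)) := gMap_mono h
      obtain ⟨w, hw⟩ := hsurj L
      have h1 : L ≤ g (k+1) x := ciInf_le hbdd (k+1)
      have h2 : w ≤ x := by
        rw [← hw] at h1; exact hmono.le_iff_le.1 h1
      have h3 : g (k+1) w - w ≤ C * (g (k+1) (g (k+1) w) - g (k+1) w) :=
        (hrb _ _ _ _ (hr (k+1)) w).1
      rw [hw] at h3
      have h4 : g (k+1) L ≤ g k x := (hmono.monotone h1).trans (hgg k x)
      nlinarith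
    have h5 : Tendsto (fun k => C * (g k x - L)) atTop (nhds (C * (L - L))) :=
      tendsto_const_nhds.mul (hL.sub tendsto_const_nhds)
    have h6 := ge_of_tendsto' h5 key
    have : L = x := by simp at h6; linarith
    rwa [this] at hL
  have hunif := Antitone.tendstoUniformlyOn_of_forall_tendsto (s := Icc (0:ℝ) 1) (F := g)
    (f := fun x => x) isCompact_Icc (fun k => (gMap_cont h).continuousOn) (fun x _ => hanti x)
    continuous_id.continuousOn (fun x _ => hlim x)
  rw [Metric.tendstoUniformlyOn_iff] at hunif
  obtain ⟨K, hK⟩ := eventually_atTop.1 (hunif ε hε)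
  refine ⟨K, fun k hk x => ?_⟩
  have h1 := hK k hk (Int.fract x) ⟨Int.fract_nonneg x, (Int.fract_lt_one x).le⟩
  rw [Real.dist_eq, abs_sub_comm] at h1
  have h2 := gMap_add_int (q := q k) (p := p k) h (Int.fract x) ⌊x⌋
  rw [Int.fract_add_floor] at h2
  have h3 := Int.fract_add_floor x
  have h4 := (abs_lt.1 h1).2
  simp only [hg] at h4
  linarith


lemma c3_facts {F : ℝ → ℝ} (hF : ContDiff ℝ 3 F) :
    Differentiable ℝ F ∧ Differentiable ℝ (deriv F) ∧ Differentiable ℝ (deriv (deriv F)) ∧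
    Continuous (deriv F) ∧ Continuous (deriv (deriv F)) ∧ Continuous (deriv (deriv (deriv F))) := by
  have h1 : ContDiff ℝ 2 (deriv F) := by
    have : ContDiff ℝ (2+1) F := hF
    exact (contDiff_succ_iff_deriv.1 this).2.2
  have h2 : ContDiff ℝ 1 (deriv (deriv F)) := by
    have : ContDiff ℝ (1+1) (deriv F) := h1
    exact (contDiff_succ_iff_deriv.1 this).2.2
  have h3 : ContDiff ℝ 0 (deriv (deriv (deriv F))) := by
    have : ContDiff ℝ (0+1) (deriv (deriv F)) := h2
    exact (contDiff_succ_iff_deriv.1 this).2.2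
  exact ⟨hF.differentiable (by norm_num), h1.differentiable (by norm_num),
    h2.differentiable (by norm_num), h1.continuous, h2.continuous, h3.continuous⟩

lemma pair_bound (F : ℝ → ℝ) (hF : ContDiff ℝ 3 F) (x y : ℝ) (hxy : x < y)
    (hpos : ∀ t ∈ Icc x y, 0 < deriv F t) (β : ℝ) (hβ0 : 0 ≤ β)
    (hS : ∀ t ∈ Icc x y, schwarzianDeriv F t ≤ 2 * β) (hβ : β * (y - x)^2 ≤ 1) :
    deriv F x * deriv F y / (F y - F x)^2 ≤ 1 / (y - x)^2 + β := by
  obtain ⟨d0, d1, d2, -, -, -⟩ := c3_facts hF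
  set D := deriv F with hD
  set D1 := deriv D with hD1
  set r : ℝ → ℝ := fun t => D1 t / D t with hr
  set u : ℝ → ℝ := fun t => Real.exp (-(1/2) * Real.log (D t)) with hu
  set w : ℝ → ℝ := fun t => (F t - F x) * u t with hw
  set w1 : ℝ → ℝ := fun t => D t * u t - (r t / 2) * w t with hw1
  have hDd : ∀ t, HasDerivAt D (D1 t) t := fun t => (d1 t).hasDerivAt
  have hFd : ∀ t, HasDerivAt F (D t) t := fun t => (d0 t).hasDerivAt
  have hrd : ∀ t ∈ Icc x y, HasDerivAt r (deriv r t) t := fun t ht =>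
    ((d2 t).div (d1 t) (hpos t ht).ne').hasDerivAt
  have hud : ∀ t ∈ Icc x y, HasDerivAt u (-(r t / 2) * u t) t := by
    intro t ht
    have h1 := (((hDd t).log (hpos t ht).ne').const_mul (-(1/2))).exp
    refine HasDerivAt.congr_deriv h1 ?_
    simp only [hr, hu]; ring
  have hwd : ∀ t ∈ Icc x y, HasDerivAt w (w1 t) t := by
    intro t ht
    have h1 := ((hFd t).sub_const (F x)).mul (hud t ht)
    refine HasDerivAt.congr_deriv h1 ?_
    simp only [hw1, hw]; ring
  have hw1d : ∀ t ∈ Icc x y, HasDerivAt w1 (-(schwarzianDeriv F t / 2) * w t) t := by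
    intro t ht
    have h1 := ((hDd t).mul (hud t ht)).sub (((hrd t ht).div_const 2).mul (hwd t ht))
    refine HasDerivAt.congr_deriv h1 ?_
    have h2 : D1 t = r t * D t := by simp only [hr]; field_simp [(hpos t ht).ne']
    have h3 : schwarzianDeriv F t = deriv r t - (1/2) * (r t)^2 := rfl
    rw [h3, h2]
    simp only [hw1]; ring
  set S : ℝ → ℝ := fun t => (t - x) - β * (t - x)^3 / 6 with hSdef
  set S1 : ℝ → ℝ := fun t => 1 - β * (t - x)^2 / 2 with hS1def
  have hSd : ∀ t, HasDerivAt S (S1 t) t := by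
    intro t
    have h1 := (((hasDerivAt_id t).sub_const x)).sub
      ((((((hasDerivAt_id t).sub_const x).pow 3).const_mul β).div_const 6))
    refine HasDerivAt.congr_deriv h1 ?_
    simp only [hS1def]; simp; ring
  have hS1d : ∀ t, HasDerivAt S1 (-β * (t - x)) t := by
    intro t
    have h1 := (((((hasDerivAt_id t).sub_const x).pow 2).const_mul β).div_const 2).const_sub 1
    refine HasDerivAt.congr_deriv h1 ?_
    simp; ring
  have hβt : ∀ t ∈ Icc x y, β * (t - x)^2 ≤ 1 := by
    intro t ht
    have : (t - x)^2 ≤ (y - x)^2 := by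
      apply pow_le_pow_left₀ (by linarith [ht.1]); linarith [ht.2]
    nlinarith
  have hSpos : ∀ t ∈ Ioc x y, 0 < S t := by
    intro t ht
    have h1 := hβt t ⟨ht.1.le, ht.2⟩
    have h2 : 0 < t - x := by linarith [ht.1]
    simp only [hSdef]
    have : (t - x) - β * (t - x)^3 / 6 = (t - x) * (1 - β * (t - x)^2 / 6) := by ring
    rw [this]; apply mul_pos h2; linarith
  have hFmono : MonotoneOn F (Icc x y) := by
    apply monotoneOn_of_deriv_nonneg (convex_Icc x y) d0.continuous.continuousOn
      d0.differentiableOn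
    intro t ht; exact (hpos t (interior_subset ht)).le
  have hwpos : ∀ t ∈ Icc x y, 0 ≤ w t := by
    intro t ht
    apply mul_nonneg _ (Real.exp_pos _).le
    have := hFmono (left_mem_Icc.2 hxy.le) ht ht.1
    linarith
  set Q : ℝ → ℝ := fun t => w1 t * S t - w t * S1 t with hQ
  have hQd : ∀ t ∈ Icc x y, HasDerivAt Q (-(schwarzianDeriv F t / 2) * w t * S t
      - w t * (-β * (t - x))) t := by
    intro t ht
    have h1 := ((hw1d t ht).mul (hSd t)).sub ((hwd t ht).mul (hS1d t))
    refine HasDerivAt.congr_deriv h1 ?_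
    ring
  have hQm : MonotoneOn Q (Icc x y) := by
    apply monotoneOn_of_deriv_nonneg (convex_Icc x y)
    · exact fun t ht => (hQd t ht).continuousAt.continuousWithinAt
    · exact fun t ht => (hQd t (interior_subset ht)).differentiableAt.differentiableWithinAt
    · intro t ht
      rw [(hQd t (interior_subset ht)).deriv]
      rw [interior_Icc] at ht
      have ht' : t ∈ Icc x y := Ioo_subset_Icc_self ht
      have e1 := hS t ht'
      have e2 := hwpos t ht'
      have e3 := hSpos t ⟨ht.1, ht.2.le⟩
      have e4 : S t ≤ t - x := by
        simp only [hSdef]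
        have : 0 ≤ β * (t - x)^3 := mul_nonneg hβ0 (pow_nonneg (by linarith [ht.1]) 3)
        linarith
      have e5 : 0 ≤ -(schwarzianDeriv F t / 2) * S t + β * (t - x) := by nlinarith
      nlinarith [mul_nonneg e2 e5]
  have hQ0 : ∀ t ∈ Icc x y, 0 ≤ Q t := by
    intro t ht
    have h1 := hQm (left_mem_Icc.2 hxy.le) ht ht.1
    have h2 : Q x = 0 := by simp [hQ, hSdef, hw]
    linarith
  have hWSd : ∀ t ∈ Ioc x y, HasDerivAt (fun t => w t / S t) (Q t / (S t)^2) t := by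
    intro t ht
    exact (hwd t ⟨ht.1.le, ht.2⟩).div (hSd t) (hSpos t ht).ne'
  have hmono : MonotoneOn (fun t => w t / S t) (Ioc x y) := by
    apply monotoneOn_of_deriv_nonneg (convex_Ioc x y)
    · exact fun t ht => (hWSd t ht).continuousAt.continuousWithinAt
    · exact fun t ht => (hWSd t (interior_subset ht)).differentiableAt.differentiableWithinAt
    · intro t ht
      have ht := interior_subset ht
      rw [(hWSd t ht).deriv]
      exact div_nonneg (hQ0 t ⟨ht.1.le, ht.2⟩) (sq_nonneg _)
  have hlim : Tendsto (fun t => w t / S t) (nhdsWithin x (Ioi x)) (nhds (D x * u x)) := by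
    have hx := left_mem_Icc.2 hxy.le
    have e1 : Tendsto (slope w x) (nhdsWithin x (Ioi x)) (nhds (w1 x)) :=
      (hasDerivAt_iff_tendsto_slope.1 (hwd x hx)).mono_left
        (nhdsWithin_mono x (fun t ht => ne_of_gt ht))
    have e2 : Tendsto (slope S x) (nhdsWithin x (Ioi x)) (nhds (S1 x)) :=
      (hasDerivAt_iff_tendsto_slope.1 (hSd x)).mono_left
        (nhdsWithin_mono x (fun t ht => ne_of_gt ht))
    have e3 : S1 x = 1 := by simp [hS1def]
    have e4 : w1 x = D x * u x := by simp [hw1, hw]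
    rw [e3] at e2; rw [e4] at e1
    have e5 := e1.div e2 one_ne_zero
    rw [div_one] at e5
    refine e5.congr' ?_
    filter_upwards [self_mem_nhdsWithin] with t ht
    have ht' : t - x ≠ 0 := by have : x < t := ht; linarith
    have hw0 : w x = 0 := by simp [hw]
    have hS0 : S x = 0 := by simp [hSdef]
    simp only [Pi.div_apply, slope_def_field]
    rw [hw0, hS0, sub_zero, sub_zero, div_div_div_cancel_right₀ ht']
  have hfin : D x * u x ≤ w y / S y := by
    refine le_of_tendsto hlim ?_
    filter_upwards [Ioc_mem_nhdsGT hxy] with t ht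
    exact hmono ht (right_mem_Ioc.2 hxy) ht.2
  have hy := right_mem_Icc.2 hxy.le
  have hx := left_mem_Icc.2 hxy.le
  have hu2 : ∀ t ∈ Icc x y, u t * u t = 1 / D t := by
    intro t ht
    simp only [hu]
    rw [← Real.exp_add]
    have h5 : 1 / D t = Real.exp (-Real.log (D t)) := by
      rw [Real.exp_neg, Real.exp_log (hpos t ht), one_div]
    rw [h5]
    congr 1; ring
  have hSy := hSpos y (right_mem_Ioc.2 hxy)
  rw [le_div_iff₀ hSy] at hfin
  have hux : 0 < u x := Real.exp_pos _
  have huy : 0 < u y := Real.exp_pos _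
  have hDx := hpos x hx
  have hDy := hpos y hy
  have hsq : D x * (S y)^2 ≤ (F y - F x)^2 / D y := by
    have h1 : (D x * u x * S y)^2 ≤ (w y)^2 := pow_le_pow_left₀ (by positivity) hfin 2
    have h2 : (D x * u x * S y)^2 = D x * (S y)^2 := by
      calc _ = D x * D x * (u x * u x) * (S y)^2 := by ring
        _ = _ := by rw [hu2 x hx]; field_simp
    have h3 : (w y)^2 = (F y - F x)^2 / D y := by
      calc _ = (F y - F x)^2 * (u y * u y) := by simp only [hw]; ring
        _ = _ := by rw [hu2 y hy]; ring
    rw [h2, h3] at h1; exact h1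
  rw [le_div_iff₀ hDy] at hsq
  have hFpos : 0 < (F y - F x)^2 := lt_of_lt_of_le (by positivity) hsq
  have h1 : D x * D y / (F y - F x)^2 ≤ 1 / (S y)^2 := by
    rw [div_le_div_iff₀ hFpos (by positivity)]; nlinarith
  refine h1.trans ?_
  have hτ : 0 < y - x := by linarith
  set τ := y - x with hτd
  have hSy' : S y = τ * (1 - β * τ^2 / 6) := by simp only [hSdef]; rw [← hτd]; ring
  set θ := β * τ^2 / 6 with hθ
  have hθ0 : 0 ≤ θ := by positivity
  have hθ1 : θ ≤ 1/6 := by rw [hθ]; linarith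
  have : 1 / τ^2 + β = (1 + 6 * θ) / τ^2 := by rw [hθ]; field_simp
  have hθ2 : 0 < 1 - θ := by linarith
  rw [this, hSy', mul_pow, div_le_div_iff₀ (by positivity) (by positivity)]
  have h7 : 1 ≤ (1 + 6 * θ) * (1 - θ)^2 := by nlinarith [mul_nonneg hθ0 hθ0, mul_nonneg hθ0 (sub_nonneg.2 hθ1)]
  nlinarith [sq_nonneg τ]


lemma cr_nocrit (F : ℝ → ℝ) (hF : ContDiff ℝ 3 F) (hm : StrictMono F) (a b c d : ℝ)
    (hab : a < b) (hbc : b < c) (hcd : c < d)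
    (hpos : ∀ t ∈ Icc a d, 0 < deriv F t) (β : ℝ) (hβ0 : 0 ≤ β)
    (hS : ∀ t ∈ Icc a d, schwarzianDeriv F t ≤ 2 * β) (hβ : β * (d - a)^2 ≤ 1) :
    cr (F a) (F b) (F c) (F d) ≤ Real.exp (β * (d - a)^2) * cr a b c d := by
  have hFd : ∀ t, HasDerivAt F (deriv F t) t := fun t => ((c3_facts hF).1 t).hasDerivAt
  have step1 : ∀ t ∈ Icc a b, - deriv F t / (F d - F t) + deriv F t / (F c - F t)
      + 1 / (d - t) - 1 / (c - t) ≤ β * (d - c) := by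
    intro t ht
    have htc : t < c := by linarith [ht.2]
    set χ : ℝ → ℝ := fun y => - deriv F t * (F y - F t)⁻¹ + (y - t)⁻¹ - β * y with hχ
    have hd : ∀ y ∈ Icc c d, HasDerivAt χ (deriv F t * deriv F y / (F y - F t)^2
        - 1 / (y - t)^2 - β) y := by
      intro y hy
      have e1 : F y - F t ≠ 0 := (sub_pos.2 (hm (by linarith [hy.1]))).ne'
      have e2 : y - t ≠ 0 := by have := hy.1; linarith
      have h1 := ((((hFd y).sub_const (F t)).fun_inv e1).const_mul (-deriv F t)).add
        (((hasDerivAt_id y).sub_const t).fun_inv e2) |>.sub ((hasDerivAt_id y).const_mul β)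
      refine HasDerivAt.congr_deriv h1 ?_
      simp only [id]
      ring
    have hanti : AntitoneOn χ (Icc c d) := by
      apply antitoneOn_of_deriv_nonpos (convex_Icc c d)
      · exact fun t ht => (hd t ht).continuousAt.continuousWithinAt
      · exact fun t ht => (hd t (interior_subset ht)).differentiableAt.differentiableWithinAt
      · intro y hy
        have hy := interior_subset hy
        rw [(hd y hy).deriv]
        have hsub : Icc t y ⊆ Icc a d := Icc_subset_Icc ht.1 hy.2
        have hty : t < y := by linarith [hy.1]
        have h2 : (y - t)^2 ≤ (d - a)^2 :=
          pow_le_pow_left₀ (by linarith) (by linarith [ht.1, hy.2]) 2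
        have := pair_bound F hF t y hty (fun s hs => hpos s (hsub hs)) β hβ0
          (fun s hs => hS s (hsub hs)) (by nlinarith)
        linarith
    have h3 := hanti (left_mem_Icc.2 hcd.le) (right_mem_Icc.2 hcd.le) hcd.le
    simp only [hχ] at h3
    simp only [div_eq_mul_inv]
    linarith
  set ψ : ℝ → ℝ := fun t => Real.log (F d - F t) - Real.log (F c - F t)
    - (Real.log (d - t) - Real.log (c - t)) - β * (d - c) * t with hψ
  have hd : ∀ t ∈ Icc a b, HasDerivAt ψ (- deriv F t / (F d - F t) + deriv F t / (F c - F t)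
      + 1 / (d - t) - 1 / (c - t) - β * (d - c)) t := by
    intro t ht
    have htc : t < c := by linarith [ht.2]
    have e1 : F d - F t ≠ 0 := (sub_pos.2 (hm (by linarith))).ne'
    have e2 : F c - F t ≠ 0 := (sub_pos.2 (hm (by linarith))).ne'
    have e3 : d - t ≠ 0 := by linarith
    have e4 : c - t ≠ 0 := by linarith
    have h1 := ((((hFd t).const_sub (F d)).log e1).sub (((hFd t).const_sub (F c)).log e2)).sub
      ((((hasDerivAt_id t).const_sub d).log e3).sub (((hasDerivAt_id t).const_sub c).log e4))
      |>.sub ((hasDerivAt_id t).const_mul (β * (d - c)))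
    refine HasDerivAt.congr_deriv h1 ?_
    simp only [id]
    ring
  have hanti : AntitoneOn ψ (Icc a b) := by
    apply antitoneOn_of_deriv_nonpos (convex_Icc a b)
    · exact fun t ht => (hd t ht).continuousAt.continuousWithinAt
    · exact fun t ht => (hd t (interior_subset ht)).differentiableAt.differentiableWithinAt
    · intro t ht
      have ht := interior_subset ht
      rw [(hd t ht).deriv]
      linarith [step1 t ht]
  have h3 := hanti (left_mem_Icc.2 hab.le) (right_mem_Icc.2 hab.le) hab.le
  simp only [hψ] at h3
  have p1 := sub_pos.2 (hm hab)
  have p2 := sub_pos.2 (hm hbc)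
  have p3 := sub_pos.2 (hm hcd)
  have lg : ∀ A B C D : ℝ, A < B → B < C → C < D → Real.log (1 - cr A B C D) =
      Real.log (D - A) - Real.log (C - A) - (Real.log (D - B) - Real.log (C - B)) ∧
      0 < 1 - cr A B C D := by
    intro A B C D h1 h2 h3
    have e1 : C - A > 0 := by linarith
    have e2 : D - B > 0 := by linarith
    have e3 : C - B > 0 := by linarith
    have e4 : D - A > 0 := by linarith
    have h5 : 1 - cr A B C D = ((D - A) * (C - B)) / ((C - A) * (D - B)) := by
      unfold cr; field_simp; ring
    rw [h5]
    refine ⟨?_, by positivity⟩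
    rw [Real.log_div (by positivity) (by positivity), Real.log_mul e4.ne' e3.ne',
      Real.log_mul e1.ne' e2.ne']
    ring
  obtain ⟨l1, l2⟩ := lg a b c d hab hbc hcd
  obtain ⟨l3, l4⟩ := lg (F a) (F b) (F c) (F d) (hm hab) (hm hbc) (hm hcd)
  set η := β * (d - c) * (b - a) with hη
  have hη0 : 0 ≤ η := by
    apply mul_nonneg (mul_nonneg hβ0 _) <;> linarith
  have h5 : Real.log (1 - cr a b c d) ≤ Real.log (1 - cr (F a) (F b) (F c) (F d)) + η := by
    rw [l1, l3, hη]; linarith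
  have h6 : (1 - cr a b c d) ≤ (1 - cr (F a) (F b) (F c) (F d)) * Real.exp η := by
    have := Real.exp_le_exp.2 h5
    rwa [Real.exp_add, Real.exp_log l2, Real.exp_log l4] at this
  have h7 : (1 - cr a b c d) * (1 - η) ≤ 1 - cr (F a) (F b) (F c) (F d) := by
    have e1 : 1 - η ≤ Real.exp (-η) := by have := Real.add_one_le_exp (-η); linarith
    calc (1 - cr a b c d) * (1 - η) ≤ (1 - cr a b c d) * Real.exp (-η) :=
          mul_le_mul_of_nonneg_left e1 l2.le
      _ ≤ (1 - cr (F a) (F b) (F c) (F d)) * Real.exp η * Real.exp (-η) :=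
          mul_le_mul_of_nonneg_right h6 (Real.exp_pos _).le
      _ = _ := by rw [mul_assoc, ← Real.exp_add]; simp
  have hcr0 : 0 ≤ cr a b c d := by
    unfold cr; apply div_nonneg <;> apply mul_nonneg <;> linarith
  have h8 : η ≤ β * (d - a)^2 * cr a b c d := by
    have : (d - c) * (b - a) ≤ (d - a)^2 * cr a b c d := by
      unfold cr
      rw [mul_div_assoc', le_div_iff₀ (by apply mul_pos <;> linarith)]
      have q1 : (c - a) * (d - b) ≤ (d - a)^2 := by nlinarith
      have q2 : 0 ≤ (d - c) * (b - a) := by apply mul_nonneg <;> linarith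
      nlinarith [mul_le_mul_of_nonneg_left q1 q2]
    rw [hη]; nlinarith
  have h9 := Real.add_one_le_exp (β * (d - a)^2)
  nlinarith [mul_le_mul_of_nonneg_right h9 hcr0, mul_nonneg hη0 hcr0]


lemma deriv_add_per {G : ℝ → ℝ} {k p : ℝ} (h : ∀ x, G (x + k) = G x + p) (x : ℝ) :
    deriv G (x + k) = deriv G x := by
  rw [← deriv_comp_add_const]
  have : (fun x => G (x + k)) = fun x => G x + p := funext h
  rw [this]; simp

lemma schw_add_per {G : ℝ → ℝ} {k p : ℝ} (h : ∀ x, G (x + k) = G x + p) (x : ℝ) :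
    schwarzianDeriv G (x + k) = schwarzianDeriv G x := by
  have h1 := deriv_add_per h
  have h2 : ∀ x, deriv (deriv G) (x + k) = deriv (deriv G) x := 
    deriv_add_per (G := deriv G) (p := 0) (by intro x; rw [h1, add_zero])
  have h3 : ∀ x, deriv (fun y => deriv (deriv G) y / deriv G y) (x + k)
      = deriv (fun y => deriv (deriv G) y / deriv G y) x :=
    deriv_add_per (G := fun y => deriv (deriv G) y / deriv G y) (p := 0)
      (by intro x; simp only [h1, h2, add_zero])
  unfold schwarzianDeriv
  rw [h1, h2, h3]

lemma schw_eq {F : ℝ → ℝ} (hF : ContDiff ℝ 3 F) (x : ℝ) (hx : deriv F x ≠ 0) :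
    schwarzianDeriv F x = deriv (deriv (deriv F)) x / deriv F x
      - 3 / 2 * (deriv (deriv F) x / deriv F x)^2 := by
  obtain ⟨d0, d1, d2, -⟩ := c3_facts hF
  unfold schwarzianDeriv
  rw [show (fun y => deriv (deriv F) y / deriv F y) = deriv (deriv F) / deriv F from rfl,
    deriv_div (d2 x) (d1 x) hx]
  field_simp
  ring

namespace MCM
variable (f : MCM)

lemma add_int (x : ℝ) (k : ℤ) : f.F (x + k) = f.F x + k := by
  let g : CircleDeg1Lift := ⟨⟨f.F, f.mono.monotone⟩, f.deg1⟩
  exact CircleDeg1Lift.map_add_int g x k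

lemma deriv_nonneg' (x : ℝ) : 0 ≤ deriv f.F x := f.mono.monotone.deriv_nonneg

lemma deriv_int (x : ℝ) (k : ℤ) : deriv f.F (x + k) = deriv f.F x :=
  deriv_add_per (fun x => f.add_int x k) x

lemma schw_int (x : ℝ) (k : ℤ) : schwarzianDeriv f.F (x + k) = schwarzianDeriv f.F x :=
  schw_add_per (fun x => f.add_int x k) x

lemma crit_int (i : Fin f.N) (k : ℤ) : deriv f.F (f.c i + k) = 0 := by
  rw [f.deriv_int, f.isCrit]

lemma mv_lower {m a b : ℝ} (hab : a ≤ b) (h : ∀ t ∈ Icc a b, m ≤ deriv f.F t) :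
    m * (b - a) ≤ f.F b - f.F a := by
  have hd := (c3_facts f.smooth).1
  exact (convex_Icc a b).mul_sub_le_image_sub_of_le_deriv hd.continuous.continuousOn
    hd.differentiableOn (fun x hx => h x (interior_subset hx)) a (left_mem_Icc.2 hab) b
    (right_mem_Icc.2 hab) hab

/-- local crude distortion estimate at a critical point in the fundamental domain -/
lemma crude_crit (i : Fin f.N) : ∃ r > 0, ∃ K > 0, ∀ a b ξ, a < b → ξ ∈ Icc a b →
    a ∈ Ioo (f.c i - r) (f.c i + r) → b ∈ Ioo (f.c i - r) (f.c i + r) →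
    deriv f.F ξ * (b - a) ≤ K * (f.F b - f.F a) := by
  obtain ⟨r, hr, hrW⟩ := Metric.isOpen_iff.1 (f.W_open i) _ (f.c_mem_W i)
  have hα := f.al_pos i
  have hβ : 0 < f.be i := hα.trans (f.al_lt_be i)
  set α := f.al i
  set β := f.be i
  set c := f.c i with hc
  set σ := f.s i - 1 with hσ
  have hσ0 : 0 < σ := by have := f.s_gt_one i; linarith
  have hlow : ∀ x ∈ Ioo (c - r) (c + r), α * |x - c|^σ ≤ deriv f.F x := by
    intro x hx
    by_cases hxc : x = c
    · rw [hxc]; simp [Real.zero_rpow hσ0.ne']; exact f.deriv_nonneg' _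
    · refine (f.powerLaw i x (hrW ?_) hxc).1.le
      rw [Real.ball_eq_Ioo]; exact hx
  have hup : ∀ x ∈ Ioo (c - r) (c + r), deriv f.F x ≤ β * |x - c|^σ := by
    intro x hx
    by_cases hxc : x = c
    · rw [hxc]; simp [Real.zero_rpow hσ0.ne']; rw [hc, f.isCrit]
    · refine (f.powerLaw i x (hrW ?_) hxc).2.le
      rw [Real.ball_eq_Ioo]; exact hx
  refine ⟨r, hr, 4 * (2:ℝ)^σ * β / α, by positivity, ?_⟩
  intro a b ξ hab hξ ha hb
  set R := max |a - c| |b - c| with hR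
  have hξR : |ξ - c| ≤ R := by
    rw [abs_le]
    have h1 : |a - c| ≤ R := le_max_left _ _
    have h2 : |b - c| ≤ R := le_max_right _ _
    rw [abs_le] at h1 h2
    constructor <;> linarith [hξ.1, hξ.2]
  have hR0 : 0 ≤ R := (abs_nonneg _).trans hξR
  have hℓR : b - a ≤ 2 * R := by
    have h1 : |a - c| ≤ R := le_max_left _ _
    have h2 : |b - c| ≤ R := le_max_right _ _
    rw [abs_le] at h1 h2
    linarith
  have hξI : ξ ∈ Ioo (c - r) (c + r) := ⟨ha.1.trans_le hξ.1, hξ.2.trans_lt hb.2⟩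
  have h1 : deriv f.F ξ ≤ β * R^σ := (hup ξ hξI).trans
    (mul_le_mul_of_nonneg_left (Real.rpow_le_rpow (abs_nonneg _) hξR hσ0.le) hβ.le)
  have h2 : (b - a) / 4 * (α * (R / 2)^σ) ≤ f.F b - f.F a := by
    rcases le_total |a - c| |b - c| with hle | hle
    · have hRb : R = |b - c| := max_eq_right hle
      have hbc : c ≤ b := by
        by_contra hcon
        push Not at hcon
        rw [abs_of_neg (by linarith), abs_of_neg (by linarith)] at hle
        linarith
      rw [abs_of_nonneg (by linarith)] at hRb
      have h3 := f.mv_lower (m := α * (R/2)^σ) (a := b - (b - a)/4) (b := b) (by linarith) (by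
        intro t ht
        have h4 : R / 2 ≤ |t - c| := by
          refine le_trans ?_ (le_abs_self _)
          linarith [ht.1]
        refine le_trans ?_ (hlow t ⟨by linarith [ha.1, ht.1], by linarith [hb.2, ht.2]⟩)
        exact mul_le_mul_of_nonneg_left (Real.rpow_le_rpow (by linarith) h4 hσ0.le) hα.le)
      have h5 := f.mono.monotone (show a ≤ b - (b - a)/4 by linarith)
      linarith
    · have hRb : R = |a - c| := max_eq_left hle
      have hbc : a ≤ c := by
        by_contra hcon
        push Not at hcon
        rw [abs_of_pos (by linarith), abs_of_pos (by linarith)] at hle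
        linarith
      rw [abs_of_nonpos (by linarith)] at hRb
      have h3 := f.mv_lower (m := α * (R/2)^σ) (a := a) (b := a + (b - a)/4) (by linarith) (by
        intro t ht
        have h4 : R / 2 ≤ |t - c| := by
          refine le_trans ?_ (neg_le_abs _)
          linarith [ht.2]
        refine le_trans ?_ (hlow t ⟨by linarith [ha.1, ht.1], by linarith [hb.2, ht.2]⟩)
        exact mul_le_mul_of_nonneg_left (Real.rpow_le_rpow (by linarith) h4 hσ0.le) hα.le)
      have h5 := f.mono.monotone (show a + (b - a)/4 ≤ b by linarith)
      linarith
  have h6 : R^σ = (2:ℝ)^σ * (R/2)^σ := by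
    rw [← Real.mul_rpow (by norm_num) (by linarith)]; congr 1; ring
  calc deriv f.F ξ * (b - a) ≤ β * R^σ * (b - a) := mul_le_mul_of_nonneg_right h1 (by linarith)
    _ = 4 * (2:ℝ)^σ * β / α * ((b - a) / 4 * (α * (R / 2)^σ)) := by
        rw [h6]; field_simp
    _ ≤ _ := mul_le_mul_of_nonneg_left h2 (by positivity)

lemma crude_local (z : ℝ) : ∃ r > 0, ∃ K > 0, ∀ a b ξ, a < b → ξ ∈ Icc a b →
    a ∈ Ioo (z - r) (z + r) → b ∈ Ioo (z - r) (z + r) →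
    deriv f.F ξ * (b - a) ≤ K * (f.F b - f.F a) := by
  by_cases hz : deriv f.F z = 0
  · obtain ⟨i, k, rfl⟩ := f.critOnly z hz
    obtain ⟨r, hr, K, hK, h⟩ := f.crude_crit i
    refine ⟨r, hr, K, hK, ?_⟩
    intro a b ξ hab hξ ha hb
    have := h (a - k) (b - k) (ξ - k) (by linarith) ⟨by linarith [hξ.1], by linarith [hξ.2]⟩
      ⟨by linarith [ha.1], by linarith [ha.2]⟩ ⟨by linarith [hb.1], by linarith [hb.2]⟩
    have e1 := f.add_int (a - k) k
    have e2 := f.add_int (b - k) k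
    have e3 := f.deriv_int (ξ - k) k
    simp only [sub_add_cancel] at e1 e2 e3
    rw [e3, e1, e2]
    convert this using 2 <;> ring
  · have hpos : 0 < deriv f.F z := lt_of_le_of_ne (f.deriv_nonneg' z) (Ne.symm hz)
    have hc := (c3_facts f.smooth).2.2.2.1
    have h1 : ∀ᶠ t in nhds z, deriv f.F t ∈ Ioo (deriv f.F z / 2) (2 * deriv f.F z) :=
      hc.continuousAt.eventually (Ioo_mem_nhds (by linarith) (by linarith))
    obtain ⟨r, hr, hball⟩ := Metric.eventually_nhds_iff_ball.1 h1
    rw [Real.ball_eq_Ioo] at hball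
    refine ⟨r, hr, 4, by norm_num, ?_⟩
    intro a b ξ hab hξ ha hb
    have hsub : ∀ t ∈ Icc a b, t ∈ Ioo (z - r) (z + r) :=
      fun t ht => ⟨ha.1.trans_le ht.1, ht.2.trans_lt hb.2⟩
    have h2 := f.mv_lower (m := deriv f.F z / 2) hab.le (fun t ht => (hball t (hsub t ht)).1.le)
    have h3 := (hball ξ (hsub ξ hξ)).2
    nlinarith

lemma crude_small : ∃ δ > 0, ∃ K > 0, ∀ a b ξ, a < b → ξ ∈ Icc a b → b - a < δ →
    deriv f.F ξ * (b - a) ≤ K * (f.F b - f.F a) := by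
  have h0 : ∃ δ > 0, ∃ K > 0, ∀ a b ξ, a ∈ Icc (0:ℝ) 1 → a < b → ξ ∈ Icc a b → b - a < δ →
      deriv f.F ξ * (b - a) ≤ K * (f.F b - f.F a) := by
    refine isCompact_Icc.induction_on (s := Icc (0:ℝ) 1)
      (p := fun s => ∃ δ > 0, ∃ K > 0, ∀ a b ξ, a ∈ s → a < b → ξ ∈ Icc a b → b - a < δ →
      deriv f.F ξ * (b - a) ≤ K * (f.F b - f.F a)) ?_ ?_ ?_ ?_
    · exact ⟨1, one_pos, 1, one_pos, fun a b ξ ha => absurd ha (by simp)⟩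
    · rintro s t hst ⟨δ, hδ, K, hK, h⟩
      exact ⟨δ, hδ, K, hK, fun a b ξ ha => h a b ξ (hst ha)⟩
    · rintro s t ⟨δ, hδ, K, hK, h⟩ ⟨δ', hδ', K', hK', h'⟩
      refine ⟨min δ δ', lt_min hδ hδ', max K K', lt_max_of_lt_left hK, ?_⟩
      intro a b ξ ha hab hξ hlt
      have hp : 0 ≤ f.F b - f.F a := sub_nonneg.2 (f.mono hab).le
      rcases ha with ha | ha
      · exact (h a b ξ ha hab hξ (hlt.trans_le (min_le_left _ _))).trans
          (mul_le_mul_of_nonneg_right (le_max_left _ _) hp)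
      · exact (h' a b ξ ha hab hξ (hlt.trans_le (min_le_right _ _))).trans
          (mul_le_mul_of_nonneg_right (le_max_right _ _) hp)
    · intro z _
      obtain ⟨r, hr, K, hK, h⟩ := f.crude_local z
      refine ⟨Ioo (z - r/2) (z + r/2), mem_nhdsWithin_of_mem_nhds
        (Ioo_mem_nhds (by linarith) (by linarith)), r/2, by linarith, K, hK, ?_⟩
      intro a b ξ ha hab hξ hlt
      exact h a b ξ hab hξ ⟨by linarith [ha.1], by linarith [ha.2]⟩
        ⟨by linarith [ha.1], by linarith [ha.2]⟩
  obtain ⟨δ, hδ, K, hK, h⟩ := h0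
  refine ⟨δ, hδ, K, hK, ?_⟩
  intro a b ξ hab hξ hlt
  set k : ℤ := ⌊a⌋ with hk
  have := h (a - k) (b - k) (ξ - k) ⟨by linarith [Int.floor_le a], by linarith [Int.lt_floor_add_one a]⟩
    (by linarith) ⟨by linarith [hξ.1], by linarith [hξ.2]⟩ (by linarith)
  have e1 := f.add_int (a - k) k
  have e2 := f.add_int (b - k) k
  have e3 := f.deriv_int (ξ - k) k
  simp only [sub_add_cancel] at e1 e2 e3
  rw [e3, e1, e2]
  convert this using 2 <;> ring

lemma deriv_bdd : ∃ M > 0, ∀ x, deriv f.F x ≤ M := by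
  obtain ⟨z, _, hz⟩ := isCompact_Icc.exists_isMaxOn (s := Icc (0:ℝ) 1) ⟨0, by simp⟩
    (c3_facts f.smooth).2.2.2.1.continuousOn
  refine ⟨deriv f.F z + 1, by linarith [f.deriv_nonneg' z], fun x => ?_⟩
  have h1 : deriv f.F (Int.fract x) ≤ deriv f.F z :=
    hz (show Int.fract x ∈ Icc (0:ℝ) 1 from ⟨Int.fract_nonneg x, (Int.fract_lt_one x).le⟩)
  have h2 := f.deriv_int (Int.fract x) ⌊x⌋
  rw [Int.fract_add_floor] at h2
  linarith

lemma min_gap (δ : ℝ) (hδ : 0 < δ) : ∃ μ > 0, ∀ x, μ ≤ f.F (x + δ) - f.F x := by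
  have hc := f.smooth.continuous
  obtain ⟨z, _, hz⟩ := isCompact_Icc.exists_isMinOn (s := Icc (0:ℝ) 1) ⟨0, by simp⟩
    (f := fun x => f.F (x + δ) - f.F x) (by fun_prop)
  refine ⟨f.F (z + δ) - f.F z, sub_pos.2 (f.mono (by linarith)), fun x => ?_⟩
  have h1 : f.F (z + δ) - f.F z ≤ f.F (Int.fract x + δ) - f.F (Int.fract x) :=
    hz (show Int.fract x ∈ Icc (0:ℝ) 1 from ⟨Int.fract_nonneg x, (Int.fract_lt_one x).le⟩)
  have h2 := f.add_int (Int.fract x) ⌊x⌋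
  have h3 := f.add_int (Int.fract x + δ) ⌊x⌋
  rw [Int.fract_add_floor] at h2
  rw [add_right_comm, Int.fract_add_floor] at h3
  linarith

lemma crude : ∃ K > 0, ∀ a b ξ, a < b → ξ ∈ Icc a b →
    deriv f.F ξ * (b - a) ≤ K * (f.F b - f.F a) := by
  obtain ⟨δ, hδ, K, hK, h⟩ := f.crude_small
  obtain ⟨M, hM, hMb⟩ := f.deriv_bdd
  obtain ⟨μ, hμ, hμb⟩ := f.min_gap δ hδ
  refine ⟨max K (2 * M * δ / μ), lt_max_of_lt_left hK, ?_⟩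
  intro a b ξ hab hξ
  have hp : 0 ≤ f.F b - f.F a := sub_nonneg.2 (f.mono hab).le
  rcases lt_or_ge (b - a) δ with hlt | hge
  · exact (h a b ξ hab hξ hlt).trans (mul_le_mul_of_nonneg_right (le_max_left _ _) hp)
  · refine le_trans ?_ (mul_le_mul_of_nonneg_right (le_max_right _ _) hp)
    have hn : ∀ n : ℕ, n * μ ≤ f.F (a + n * δ) - f.F a := by
      intro n
      induction n with
      | zero => simp
      | succ n ih =>
        have := hμb (a + n * δ)
        push_cast
        rw [show a + ((n:ℝ) + 1) * δ = a + n * δ + δ by ring]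
        linarith
    set n := ⌊(b - a) / δ⌋₊ with hnn
    have h1 : (n:ℝ) * δ ≤ b - a := by
      rw [← le_div_iff₀ hδ]; exact Nat.floor_le (by apply div_nonneg <;> linarith)
    have h2 : b - a < (n + 1) * δ := by
      rw [← div_lt_iff₀ hδ]; exact Nat.lt_floor_add_one _
    have h3 : (1:ℝ) ≤ n := by
      have : 1 ≤ n := by
        rw [hnn, Nat.one_le_floor_iff, le_div_iff₀ hδ]; linarith
      exact_mod_cast this
    have h4 := hn n
    have h5 := f.mono.monotone (show a + n * δ ≤ b by linarith)
    have h6 : b - a ≤ 2 * n * δ := by nlinarith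
    have h7 : n * μ ≤ f.F b - f.F a := by linarith
    calc deriv f.F ξ * (b - a) ≤ M * (2 * n * δ) := by
          apply mul_le_mul (hMb ξ) h6 (by linarith) hM.le
      _ = 2 * M * δ / μ * (n * μ) := by field_simp
      _ ≤ _ := mul_le_mul_of_nonneg_left h7 (by positivity)

lemma schw_bdd : ∃ B > 0, ∀ x, deriv f.F x ≠ 0 → schwarzianDeriv f.F x ≤ B := by
  have h0 : ∃ B : ℝ, ∀ x ∈ Icc (0:ℝ) 1, deriv f.F x ≠ 0 → schwarzianDeriv f.F x ≤ B := by
    refine isCompact_Icc.induction_on (s := Icc (0:ℝ) 1)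
      (p := fun s => ∃ B : ℝ, ∀ x ∈ s, deriv f.F x ≠ 0 → schwarzianDeriv f.F x ≤ B) ?_ ?_ ?_ ?_
    · exact ⟨1, fun a ha => absurd ha (by simp)⟩
    · rintro s t hst ⟨B, h⟩
      exact ⟨B, fun a ha => h a (hst ha)⟩
    · rintro s t ⟨B, h⟩ ⟨B', h'⟩
      refine ⟨max B B', ?_⟩
      rintro x (hx | hx) hx0
      · exact (h x hx hx0).trans (le_max_left _ _)
      · exact (h' x hx hx0).trans (le_max_right _ _)
    · intro z _
      by_cases hz : deriv f.F z = 0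
      · obtain ⟨i, k, rfl⟩ := f.critOnly z hz
        refine ⟨(fun y => y + (-k : ℝ)) ⁻¹' f.W i, mem_nhdsWithin_of_mem_nhds ?_, 0, ?_⟩
        · apply ((f.W_open i).preimage (by fun_prop)).mem_nhds
          simpa using f.c_mem_W i
        · intro x hx hx0
          have e1 := f.schw_int (x + (-k)) k
          simp only [neg_add_cancel_right] at e1
          rw [e1]
          refine (f.negSchwarzian i _ hx ?_).le
          intro hc
          have hc : x + -(k:ℝ) = f.c i := hc
          apply hx0
          have e3 := f.deriv_int (x + (-k)) k
          simp only [neg_add_cancel_right] at e3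
          rw [e3, hc, f.isCrit]
      · obtain ⟨d0, d1, d2, c1, c2, c3⟩ := c3_facts f.smooth
        have h1 : ContinuousAt (fun x => deriv (deriv (deriv f.F)) x / deriv f.F x
          - 3 / 2 * (deriv (deriv f.F) x / deriv f.F x)^2) z := by
          refine (c3.continuousAt.div c1.continuousAt hz).sub
            (((c2.continuousAt.div c1.continuousAt hz).pow 2).const_mul _)
        have h2 := h1.eventually (gt_mem_nhds (lt_add_one _))
        refine ⟨_, mem_nhdsWithin_of_mem_nhds h2,
          (fun x => deriv (deriv (deriv f.F)) x / deriv f.F x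
          - 3 / 2 * (deriv (deriv f.F) x / deriv f.F x)^2) z + 1, ?_⟩
        intro x hx hx0
        rw [schw_eq f.smooth x hx0]
        exact le_of_lt hx
  obtain ⟨B, hB⟩ := h0
  refine ⟨max B 1, by simp, fun x hx => ?_⟩
  have h2 := f.deriv_int (Int.fract x) ⌊x⌋
  have h3 := f.schw_int (Int.fract x) ⌊x⌋
  rw [Int.fract_add_floor] at h2 h3
  rw [h3]
  exact (hB _ ⟨Int.fract_nonneg x, (Int.fract_lt_one x).le⟩ (by rwa [← h2])).trans (le_max_left _ _)

end MCM

namespace MCM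
variable (f : MCM)

lemma cr_crude : ∃ K > 0, ∀ a b c d, a < b → b < c → c < d →
    cr (f.F a) (f.F b) (f.F c) (f.F d) ≤ K * cr a b c d := by
  obtain ⟨K, hK, h⟩ := f.crude
  refine ⟨K * K, by positivity, ?_⟩
  intro a b c d hab hbc hcd
  have hd := (c3_facts f.smooth).1
  obtain ⟨ξ, hξ, hξe⟩ := exists_deriv_eq_slope f.F hab hd.continuous.continuousOn
    hd.differentiableOn
  obtain ⟨η, hη, hηe⟩ := exists_deriv_eq_slope f.F hcd hd.continuous.continuousOn
    hd.differentiableOn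
  have e : ∀ A B C D : ℝ, cr A B C D = ((B - A) / (C - A)) * ((D - C) / (D - B)) := by
    intro A B C D; unfold cr; rw [div_mul_div_comm]
  have p1 := sub_pos.2 (f.mono hab)
  have p2 := sub_pos.2 (f.mono hbc)
  have p3 := sub_pos.2 (f.mono hcd)
  have h1 := h a c ξ (by linarith) ⟨hξ.1.le, by linarith [hξ.2]⟩
  have h2 := h b d η (by linarith) ⟨by linarith [hη.1], hη.2.le⟩
  have g1 : (f.F b - f.F a) / (f.F c - f.F a) ≤ K * ((b - a) / (c - a)) := by
    rw [hξe, div_mul_eq_mul_div, div_le_iff₀ (by linarith)] at h1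
    rw [mul_div_assoc', div_le_div_iff₀ (by linarith) (by linarith)]
    linarith
  have g2 : (f.F d - f.F c) / (f.F d - f.F b) ≤ K * ((d - c) / (d - b)) := by
    rw [hηe, div_mul_eq_mul_div, div_le_iff₀ (by linarith)] at h2
    rw [mul_div_assoc', div_le_div_iff₀ (by linarith) (by linarith)]
    linarith
  rw [e, e]
  calc _ ≤ K * ((b - a) / (c - a)) * (K * ((d - c) / (d - b))) := by
        apply mul_le_mul g1 g2
        · apply div_nonneg <;> linarith
        · apply mul_nonneg hK.le; apply div_nonneg <;> linarith
    _ = _ := by ring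

lemma jump {a d c : ℝ} {k : ℤ} (had : a < d) (h1 : a ≤ c + k) (h2 : c + k ≤ d) :
    (⌈a - c⌉ : ℝ) + ⌊a - c⌋ + 1 ≤ ⌈d - c⌉ + ⌊d - c⌋ := by
  have e1 : ⌈a - c⌉ ≤ k := by rw [Int.ceil_le]; linarith
  have e2 : k ≤ ⌊d - c⌋ := by rw [Int.le_floor]; linarith
  have : ⌊a - c⌋ + 1 ≤ ⌈d - c⌉ := by
    rw [Int.add_one_le_iff, Int.lt_ceil]
    linarith [Int.floor_le (a - c)]
  exact_mod_cast (by omega : ⌈a - c⌉ + ⌊a - c⌋ + 1 ≤ ⌈d - c⌉ + ⌊d - c⌋)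

lemma exists_CRB : ∃ (Φ : ℝ → ℝ) (κ : ℝ), CRB f.F Φ κ := by
  obtain ⟨L, hL, hcr⟩ := f.cr_crude
  obtain ⟨B, hB, hSB⟩ := f.schw_bdd
  set δ : ℝ := min 1 (1 / B) with hδ
  have hδ0 : 0 < δ := lt_min one_pos (by positivity)
  set A1 : ℝ := max 1 (L / δ) with hA1
  have hA1p : 1 ≤ A1 := le_max_left _ _
  set J : Fin f.N → ℝ → ℝ := fun i x => (⌈x - f.c i⌉ : ℝ) + ⌊x - f.c i⌋ with hJ
  have hJm : ∀ i, Monotone (J i) := by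
    intro i x y hxy
    have e1 : ⌈x - f.c i⌉ ≤ ⌈y - f.c i⌉ := Int.ceil_le_ceil (by linarith)
    have e2 : ⌊x - f.c i⌋ ≤ ⌊y - f.c i⌋ := Int.floor_le_floor (by linarith)
    simp only [hJ]
    exact_mod_cast add_le_add e1 e2
  have hJp : ∀ i x, J i (x + 1) = J i x + 2 := by
    intro i x
    simp only [hJ]
    rw [add_sub_right_comm, Int.ceil_add_one, Int.floor_add_one]
    push_cast; ring
  refine ⟨fun x => A1 * x + L * ∑ i, J i x, A1 + L * (2 * f.N), ?_, ?_, ?_⟩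
  · intro x y hxy
    have : ∑ i, J i x ≤ ∑ i, J i y := Finset.sum_le_sum fun i _ => hJm i hxy
    show A1 * x + L * ∑ i, J i x ≤ A1 * y + L * ∑ i, J i y
    nlinarith
  · intro x
    simp only [hJp, Finset.sum_add_distrib]
    simp
    ring
  · intro a b c d hab hbc hcd
    have hcr0 : 0 ≤ cr a b c d := by
      unfold cr; apply div_nonneg <;> apply mul_nonneg <;> linarith
    have had : a < d := by linarith
    have hsum : ∑ i, J i a ≤ ∑ i, J i d := Finset.sum_le_sum fun i _ => hJm i had.le
    have hL1 : L ≤ Real.exp L := by linarith [Real.add_one_le_exp L]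
    by_cases hcrit : ∃ t ∈ Icc a d, deriv f.F t = 0
    · obtain ⟨t, ht, ht0⟩ := hcrit
      obtain ⟨i, k, rfl⟩ := f.critOnly t ht0
      have hj : J i a + 1 ≤ J i d := jump had ht.1 ht.2
      have hs : ∑ i, J i a + 1 ≤ ∑ i, J i d := by
        rw [← Finset.add_sum_erase _ _ (Finset.mem_univ i),
          ← Finset.add_sum_erase _ (fun i => J i d) (Finset.mem_univ i)]
        have := Finset.sum_le_sum (s := Finset.univ.erase i) fun i _ => hJm i had.le
        linarith
      refine (hcr a b c d hab hbc hcd).trans (mul_le_mul_of_nonneg_right ?_ hcr0)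
      refine hL1.trans (Real.exp_le_exp.2 ?_)
      nlinarith
    · push Not at hcrit
      rcases le_or_gt (d - a) δ with hle | hgt
      · have h1 : d - a ≤ 1 := hle.trans (min_le_left _ _)
        have h2 : d - a ≤ 1 / B := hle.trans (min_le_right _ _)
        have h3 : B * (d - a) ≤ 1 := by rw [le_div_iff₀ hB] at h2; linarith
        have h4 : B * (d - a)^2 ≤ d - a := by nlinarith
        have := cr_nocrit f.F f.smooth f.mono a b c d hab hbc hcd
          (fun t ht => lt_of_le_of_ne (f.deriv_nonneg' t) (Ne.symm (hcrit t ht))) B hB.le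
          (fun t ht => by linarith [hSB t (hcrit t ht)]) (by linarith)
        refine this.trans (mul_le_mul_of_nonneg_right (Real.exp_le_exp.2 ?_) hcr0)
        nlinarith
      · refine (hcr a b c d hab hbc hcd).trans (mul_le_mul_of_nonneg_right ?_ hcr0)
        refine hL1.trans (Real.exp_le_exp.2 ?_)
        have h5 : L / δ ≤ A1 := le_max_right _ _
        rw [div_le_iff₀ hδ0] at h5
        nlinarith
end MCM


lemma schw_comp {G H : ℝ → ℝ} (hG : ContDiff ℝ 3 G) (hH : ContDiff ℝ 3 H) (x : ℝ)
    (h1 : deriv H x ≠ 0) (h2 : deriv G (H x) ≠ 0) :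
    schwarzianDeriv (G ∘ H) x = schwarzianDeriv G (H x) * (deriv H x)^2 + schwarzianDeriv H x := by
  obtain ⟨g0, g1, g2, -⟩ := c3_facts hG
  obtain ⟨k0, k1, k2, -⟩ := c3_facts hH
  have e1 : deriv (G ∘ H) = fun x => deriv G (H x) * deriv H x := by
    funext t; exact deriv_comp t (g0 _) (k0 _)
  have hc : ∀ {A : ℝ → ℝ}, Differentiable ℝ A → ∀ t,
      HasDerivAt (fun x => A (H x)) (deriv A (H t) * deriv H t) t :=
    fun hA t => ((hA (H t)).hasDerivAt).comp t (k0 t).hasDerivAt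
  have e2 : deriv (deriv (G ∘ H)) = fun x => deriv (deriv G) (H x) * deriv H x * deriv H x
      + deriv G (H x) * deriv (deriv H) x := by
    funext t
    rw [e1]
    exact ((hc g1 t).mul (k1 t).hasDerivAt).deriv
  have e3 : deriv (deriv (deriv (G ∘ H))) x = deriv (deriv (deriv G)) (H x) * (deriv H x)^3
      + 3 * deriv (deriv G) (H x) * deriv H x * deriv (deriv H) x
      + deriv G (H x) * deriv (deriv (deriv H)) x := by
    rw [e2]
    refine HasDerivAt.deriv ?_
    refine HasDerivAt.congr_deriv ((((hc g2 x).mul (k1 x).hasDerivAt).mul (k1 x).hasDerivAt).add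
      ((hc g1 x).mul (k2 x).hasDerivAt)) ?_
    simp only [Pi.mul_apply]
    ring
  have h3 : deriv (G ∘ H) x ≠ 0 := by rw [e1]; exact mul_ne_zero h2 h1
  rw [schw_eq (hG.comp hH) x h3, schw_eq hG _ h2, schw_eq hH x h1, e3, e2, e1]
  field_simp
  ring

lemma contDiff_iter {F : ℝ → ℝ} (hF : ContDiff ℝ 3 F) (m : ℕ) : ContDiff ℝ 3 F^[m] := by
  induction m with
  | zero => exact contDiff_id
  | succ m ih => rw [Function.iterate_succ']; exact hF.comp ih

lemma deriv_iter_succ {F : ℝ → ℝ} (hF : ContDiff ℝ 3 F) (m : ℕ) (x : ℝ) :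
    deriv F^[m+1] x = deriv F (F^[m] x) * deriv F^[m] x := by
  rw [Function.iterate_succ']
  exact deriv_comp x ((c3_facts hF).1 _) ((c3_facts (contDiff_iter hF m)).1 _)

lemma schw_iter {F : ℝ → ℝ} (hF : ContDiff ℝ 3 F) (q : ℕ) (x : ℝ) (hx : deriv F^[q] x ≠ 0) :
    schwarzianDeriv F^[q] x =
      ∑ m ∈ Finset.range q, schwarzianDeriv F (F^[m] x) * (deriv F^[m] x)^2 := by
  induction q with
  | zero =>
    have h1 : deriv (id : ℝ → ℝ) = fun _ => 1 := by funext t; simp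
    simp [schwarzianDeriv, h1]
  | succ q ih =>
    have h := deriv_iter_succ hF q x
    rw [h] at hx
    have h1 := left_ne_zero_of_mul hx
    have h2 := right_ne_zero_of_mul hx
    rw [Finset.sum_range_succ, ← ih h2, Function.iterate_succ', schw_comp hF (contDiff_iter hF q) x h2 h1]
    ring

lemma deriv_iter_ne {F : ℝ → ℝ} (hF : ContDiff ℝ 3 F) (q : ℕ) (x : ℝ) (hx : deriv F^[q] x ≠ 0) :
    ∀ m < q, deriv F (F^[m] x) ≠ 0 := by
  induction q with
  | zero => intro m hm; omega
  | succ q ih =>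
    have h := deriv_iter_succ hF q x
    rw [h] at hx
    have h1 := left_ne_zero_of_mul hx
    have h2 := right_ne_zero_of_mul hx
    intro m hm
    rcases Nat.lt_succ_iff_lt_or_eq.1 hm with h3 | rfl
    · exact ih h2 m h3
    · exact h1

lemma abs_rpow_deriv (c σ x : ℝ) (hx : x ≠ c) :
    HasDerivAt (fun t => |t - c|^σ) (σ * |x - c|^σ / (x - c)) x := by
  have hx' : x - c ≠ 0 := sub_ne_zero.2 hx
  have h1 : ∀ t, t ≠ c → |t - c|^σ = Real.exp (Real.log (t - c) * σ) := by
    intro t ht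
    rw [Real.rpow_def_of_pos (abs_pos.2 (sub_ne_zero.2 ht)), Real.log_abs]
  have h2 := ((((hasDerivAt_id x).sub_const c).log hx').mul_const σ).exp
  have h3 := h2.congr_of_eventuallyEq (f₁ := fun t => |t - c|^σ) (by
    filter_upwards [isOpen_ne.mem_nhds hx] with t ht
    exact h1 t ht)
  refine h3.congr_deriv ?_
  rw [h1 x hx]
  simp only [id]
  ring

lemma canonical_schw (F : ℝ → ℝ) (c s : ℝ) (hs : 1 < s)
    (h : ∃ U ∈ nhds c, ∀ x ∈ U, F x = F c + (x - c) * |x - c|^(s - 1)) :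
    ∃ r > 0, ∀ x, x ≠ c → |x - c| < r →
      schwarzianDeriv F x = -((s^2 - 1) / 2) / (x - c)^2 := by
  obtain ⟨U, hU, hUF⟩ := h
  obtain ⟨r, hr, hrU⟩ := Metric.mem_nhds_iff.1 hU
  refine ⟨r, hr, ?_⟩
  set V : Set ℝ := Metric.ball c r ∩ {x | x ≠ c} with hV
  have hVo : IsOpen V := Metric.isOpen_ball.inter isOpen_ne
  set σ := s - 1 with hσ
  have d1 : ∀ x ∈ V, deriv F x = s * |x - c|^σ := by
    intro x hx
    have hxc : x - c ≠ 0 := sub_ne_zero.2 hx.2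
    have h1 := (((hasDerivAt_id x).sub_const c).mul (abs_rpow_deriv c σ x hx.2)).const_add (F c)
    have h2 := h1.congr_of_eventuallyEq (f₁ := F) (by
      filter_upwards [hVo.mem_nhds hx] with t ht
      exact hUF t (hrU ht.1))
    rw [h2.deriv]
    simp only [id]
    field_simp
    rw [hσ]; ring
  have d2 : ∀ x ∈ V, deriv (deriv F) x = s * (σ * |x - c|^σ / (x - c)) := by
    intro x hx
    have h1 := (abs_rpow_deriv c σ x hx.2).const_mul s
    have h2 := h1.congr_of_eventuallyEq (f₁ := deriv F) (by
      filter_upwards [hVo.mem_nhds hx] with t ht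
      exact d1 t ht)
    exact h2.deriv
  have d3 : ∀ x ∈ V, deriv (deriv F) x / deriv F x = σ * (x - c)⁻¹ := by
    intro x hx
    have hxc : x - c ≠ 0 := sub_ne_zero.2 hx.2
    have hp : |x - c|^σ ≠ 0 := (Real.rpow_pos_of_pos (abs_pos.2 hxc) σ).ne'
    have hs0 : s ≠ 0 := by linarith
    rw [d1 x hx, d2 x hx]
    field_simp
  intro x hxc hxr
  have hx : x ∈ V := ⟨by rw [Metric.mem_ball, Real.dist_eq]; exact hxr, hxc⟩
  have hxc' : x - c ≠ 0 := sub_ne_zero.2 hxc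
  have h1 := (((hasDerivAt_id x).sub_const c).fun_inv hxc').const_mul σ
  have h2 := h1.congr_of_eventuallyEq (f₁ := fun y => deriv (deriv F) y / deriv F y) (by
      filter_upwards [hVo.mem_nhds hx] with t ht
      exact d3 t ht)
  unfold schwarzianDeriv
  rw [h2.deriv, d3 x hx]
  simp only [id]
  field_simp
  rw [hσ]; ring

/-- reflection of a lift -/
def reflMap (F : ℝ → ℝ) (x : ℝ) : ℝ := -F (-x)

lemma refl_iter (F : ℝ → ℝ) (m : ℕ) (x : ℝ) : (reflMap F)^[m] x = -F^[m] (-x) := by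
  induction m generalizing x with
  | zero => simp
  | succ m ih => rw [Function.iterate_succ_apply, ih, Function.iterate_succ_apply]; simp [reflMap]

lemma refl_core {F : ℝ → ℝ} {ρ : ℝ} (h : Core F ρ) : Core (reflMap F) (-ρ) := by
  refine ⟨?_, ?_, ?_, h.irr.neg, ?_⟩
  · intro x y hxy
    have := h.mono (neg_lt_neg hxy)
    simp only [reflMap]; linarith
  · have := h.cont
    unfold reflMap; fun_prop
  · intro x
    have := h.deg1 (-(x+1))
    simp only [neg_add_rev, neg_add_cancel_comm] at this
    simp only [reflMap, neg_add_rev]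
    linarith
  · intro k l p r hlt x
    rw [refl_iter, refl_iter]
    have := h.order l k (-r) (-p) (by push_cast; linarith) (-x)
    push_cast at this
    linarith

lemma refl_CRB {F Φ : ℝ → ℝ} {κ : ℝ} (hb : CRB F Φ κ) : CRB (reflMap F) (fun x => -Φ (-x)) κ := by
  refine ⟨?_, ?_, ?_⟩
  · intro x y hxy
    exact neg_le_neg (hb.mono (neg_le_neg hxy))
  · intro x
    have := hb.per (-(x+1))
    have e : -(x + 1) + 1 = -x := by ring
    rw [e] at this
    show -Φ (-(x+1)) = -Φ (-x) + κ
    linarith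
  · intro a b c d hab hbc hcd
    have h1 := hb.cr_le (-d) (-c) (-b) (-a) (by linarith) (by linarith) (by linarith)
    have e : ∀ A B C D : ℝ, cr (-A) (-B) (-C) (-D) = cr D C B A := by
      intro A B C D; unfold cr; congr 1 <;> ring
    unfold reflMap
    rw [e]
    rw [e d c b a] at h1
    convert h1 using 2
    congr 1; ring


lemma deriv_sum_side (F : ℝ → ℝ) (ρ κ : ℝ) (Φ : ℝ → ℝ) (h : Core F ρ) (hb : CRB F Φ κ)
    (q q' : ℕ → ℕ) (p p' : ℕ → ℤ) (hr : ∀ k, RetPair ρ (q k) (q' k) (p k) (p' k))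
    (ht : ∀ k, 2 * ((q (k+1) : ℝ) * ρ - p (k+1)) ≤ q k * ρ - p k) (η : ℝ) (hη : 0 < η) :
    ∃ K, ∀ k ≥ K, ∀ y x, y ≤ x → x ≤ gMap F (q k) (p k) y → ∀ D : ℕ → ℝ,
      (∀ m, 0 ≤ D m) → (∀ m, HasDerivAt F^[m] (D m) x) → gMap F (q k) (p k) y - y < η ∧
      ∑ m ∈ Finset.range (q' k), (D m)^2 * (gMap F (q k) (p k) y - y)^2 ≤ η := by
  obtain ⟨C, hC, hdb⟩ := deriv_bound F ρ κ Φ h hb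
  set ε := min η (η / (2 * C^2)) with hε
  have hε0 : 0 < ε := lt_min hη (by positivity)
  obtain ⟨K, hK⟩ := mesh F ρ κ Φ h hb q q' p p' hr ht ε hε0
  refine ⟨K, fun k hk y x hyx hxy D hD0 hD => ⟨(hK k hk y).trans_le (min_le_left _ _), ?_⟩⟩
  have hsum := sum_one h (hr k) (Φ := fun x => x) (κ := 1) monotone_id (fun x => rfl) y
  have hterm : ∀ m ∈ Finset.range (q' k), (D m)^2 * (gMap F (q k) (p k) y - y)^2 ≤
      C^2 * ε * (F^[m] (gMap F (q k) (p k) y) - F^[m] y) := by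
    intro m hm
    have h1 := hdb _ _ _ _ (hr k) y x (D m) m (Finset.mem_range.1 hm).le hyx hxy (hD m)
    have h2 := hK k hk (F^[m] y)
    have h3 := lt_gMap h (hr k) (F^[m] y)
    have h4 := lt_gMap h (hr k) y
    rw [gMap_iter h]
    set I := gMap F (q k) (p k) (F^[m] y) - F^[m] y with hI
    have hI0 : 0 < I := by linarith
    calc (D m)^2 * (gMap F (q k) (p k) y - y)^2 = (D m * (gMap F (q k) (p k) y - y))^2 := by ring
      _ ≤ (C * I)^2 := pow_le_pow_left₀ (mul_nonneg (hD0 m) (by linarith)) h1 2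
      _ = C^2 * I * I := by ring
      _ ≤ C^2 * ε * I := by gcongr
  have hε2 : C^2 * ε * 2 ≤ η := by
    have : ε ≤ η / (2 * C^2) := min_le_right _ _
    rw [le_div_iff₀ (by positivity)] at this
    linarith
  calc _ ≤ ∑ m ∈ Finset.range (q' k), C^2 * ε * (F^[m] (gMap F (q k) (p k) y) - F^[m] y) :=
        Finset.sum_le_sum hterm
    _ = C^2 * ε * ∑ m ∈ Finset.range (q' k), (F^[m] (gMap F (q k) (p k) y) - F^[m] y) := by
        rw [Finset.mul_sum]
    _ ≤ C^2 * ε * 2 := by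
        apply mul_le_mul_of_nonneg_left _ (by positivity); linarith
    _ ≤ η := hε2

lemma mcm_deriv_sum (f : MCM) (ρ : ℝ) (hirr : Irrational ρ) (hmem : ρ ∈ Set.Ioo (0 : ℝ) 1)
    (hcore : Core f.F ρ) (c η : ℝ) (hη : 0 < η) :
    ∃ n₀ : ℕ, ∀ n ≥ n₀, ∀ x ∈ uIcc c (f.F^[qDen ρ n] c - pNum ρ n),
      |f.F^[qDen ρ n] c - pNum ρ n - c| < η ∧
      ∑ m ∈ Finset.range (qDen ρ (n+1)), (deriv f.F^[m] x)^2
        * (f.F^[qDen ρ n] c - pNum ρ n - c)^2 ≤ η := by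
  obtain ⟨Φ, κ, hb⟩ := f.exists_CRB
  have hdiff : ∀ m x, HasDerivAt f.F^[m] (deriv f.F^[m] x) x := fun m x =>
    ((c3_facts (contDiff_iter f.smooth m)).1 x).hasDerivAt
  have hd0 : ∀ m x, 0 ≤ deriv f.F^[m] x := fun m x => (f.mono.iterate m).monotone.deriv_nonneg
  have hrE : ∀ k : ℕ, RetPair ρ (qDen ρ (2*k)) (qDen ρ (2*k+1)) (pNum ρ (2*k)) (pNum ρ (2*k+1)) :=
    fun k => by simpa using retPair_gen ρ hirr hmem (2*k) 1 (by simp)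
  have hrO : ∀ k : ℕ, RetPair (-ρ) (qDen ρ (2*k+1)) (qDen ρ (2*k+2)) (-pNum ρ (2*k+1))
      (-pNum ρ (2*k+2)) :=
    fun k => by simpa using retPair_gen ρ hirr hmem (2*k+1) (-1) (by simp [pow_succ])
  obtain ⟨K1, hK1⟩ := deriv_sum_side f.F ρ κ Φ hcore hb (fun k => qDen ρ (2*k))
    (fun k => qDen ρ (2*k+1)) (fun k => pNum ρ (2*k)) (fun k => pNum ρ (2*k+1)) hrE (by
      intro k
      have e1 := retPair_abs ρ hirr hmem (2*k) 1 (by simp)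
      have e2 := retPair_abs ρ hirr hmem (2*(k+1)) 1 (by simp)
      have e3 := tErr_half ρ hirr hmem (2*k)
      have e4 : 2 * (k+1) = 2*k+2 := by ring
      rw [e4] at e2 ⊢
      rw [← e1, ← e2] at e3
      push_cast at e3 ⊢
      linarith) η hη
  obtain ⟨K2, hK2⟩ := deriv_sum_side (reflMap f.F) (-ρ) κ (fun x => -Φ (-x)) (refl_core hcore)
    (refl_CRB hb) (fun k => qDen ρ (2*k+1))
    (fun k => qDen ρ (2*k+2)) (fun k => -pNum ρ (2*k+1)) (fun k => -pNum ρ (2*k+2)) hrO (by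
      intro k
      have e1 := retPair_abs ρ hirr hmem (2*k+1) (-1) (by simp [pow_succ])
      have e2 := retPair_abs ρ hirr hmem (2*k+1+2) (-1) (by simp [pow_succ])
      have e3 := tErr_half ρ hirr hmem (2*k+1)
      have e4 : 2 * (k+1) + 1 = 2*k+1+2 := by ring
      rw [e4]
      rw [← e1, ← e2] at e3
      push_cast at e3 ⊢
      linarith) η hη
  refine ⟨2 * K1 + 2 * K2, ?_⟩
  intro n hn x hx
  rcases Nat.even_or_odd' n with ⟨k, rfl | rfl⟩
  · have hg : gMap f.F (qDen ρ (2*k)) (pNum ρ (2*k)) c = f.F^[qDen ρ (2*k)] c - pNum ρ (2*k) := by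
      simp [gMap]
    have hlt := lt_gMap hcore (hrE k) c
    rw [hg] at hlt
    rw [uIcc_of_le hlt.le] at hx
    have := hK1 k (by omega) c x hx.1 (by rw [hg]; exact hx.2) (fun m => deriv f.F^[m] x)
      (fun m => hd0 m x) (fun m => hdiff m x)
    simp only [hg] at this
    rw [abs_of_pos (by linarith)]
    exact this
  · have hg : gMap (reflMap f.F) (qDen ρ (2*k+1)) (-pNum ρ (2*k+1)) (-c)
        = -(f.F^[qDen ρ (2*k+1)] c - pNum ρ (2*k+1)) := by
      simp [gMap, refl_iter]; ring
    have hlt := lt_gMap (refl_core hcore) (hrO k) (-c)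
    rw [hg] at hlt
    rw [uIcc_of_ge (by linarith)] at hx
    have := hK2 k (by omega) (-c) (-x) (by linarith [hx.2]) (by rw [hg]; linarith [hx.1])
      (fun m => deriv f.F^[m] x) (fun m => hd0 m x) (fun m => by
        have e : (reflMap f.F)^[m] = fun t => -f.F^[m] (-t) := by funext t; exact refl_iter _ _ _
        rw [e]
        have h1 : HasDerivAt f.F^[m] (deriv f.F^[m] x) (-(-x)) := by rw [neg_neg]; exact hdiff m x
        have h2 := (h1.comp (-x) (hasDerivAt_neg (-x))).neg
        refine h2.congr_deriv ?_
        ring)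
    simp only [hg] at this
    rw [abs_of_neg (by linarith)]
    have e5 : (-(f.F^[qDen ρ (2*k+1)] c - pNum ρ (2*k+1)) - -c) =
      -(f.F^[qDen ρ (2*k+1)] c - pNum ρ (2*k+1) - c) := by ring
    rw [e5] at this
    simpa only [neg_sq, even_two, Even.neg_pow] using this

/-- location of the atoms -/
lemma atom_loc (F : ℝ → ℝ) (ρ : ℝ) (hirr : Irrational ρ) (hmem : ρ ∈ Set.Ioo (0 : ℝ) 1)
    (hcore : Core F ρ) (c : ℝ) (n k : ℕ) (hk : k < cfDigit ρ (n+1)) (x : ℝ)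
    (hx : x ∈ atomSet F ρ c (n + 1) (qDen ρ n + k * qDen ρ (n + 1))) :
    x - ((pNum ρ n + k * pNum ρ (n+1) : ℤ) : ℝ) ∈ uIcc c (F^[qDen ρ n] c - pNum ρ n) ∧
    x - ((pNum ρ n + k * pNum ρ (n+1) : ℤ) : ℝ) ≠ c := by
  have t0 := tErr_sign ρ hirr hmem n
  have t1 := tErr_sign ρ hirr hmem (n+1)
  have t2 := tErr_sign ρ hirr hmem (n+2)
  have hrec : tErr ρ (n+2) = cfDigit ρ (n+1) * tErr ρ (n+1) + tErr ρ n := by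
    simp only [tErr, qDen, pNum]; push_cast; ring
  have hk' : (k:ℝ) + 1 ≤ cfDigit ρ (n+1) := by exact_mod_cast hk
  unfold atomSet at hx
  set q := qDen ρ n
  set q' := qDen ρ (n+1)
  set p := pNum ρ n
  set p' := pNum ρ (n+1)
  have et0 : tErr ρ n = q * ρ - p := rfl
  have et1 : tErr ρ (n+1) = q' * ρ - p' := rfl
  rcases Nat.even_or_odd n with hn | hn
  · rw [hn.neg_one_pow] at t0
    rw [hn.add_one.neg_one_pow] at t1
    rw [(hn.add (even_two)).neg_one_pow] at t2
    have hpos : 0 < tErr ρ n + (k + 1) * tErr ρ (n+1) := by nlinarith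
    rw [et0, et1] at hpos
    rw [et1] at t1
    have a1 := hcore.order 0 (q + k * q' + q') 0 (-(p + k * p' + p')) (by push_cast; linarith) c
    have a2 := hcore.order (q + k * q' + q') (q + k * q') (-(p + k * p' + p')) (-(p + k * p'))
      (by push_cast; linarith) c
    have a3 := hcore.order_le (q + k * q') q (-(p + k * p')) (-p) (by
      push_cast
      have : 0 ≤ (k:ℝ) * (p' - q' * ρ) := mul_nonneg (by positivity) (by linarith)
      linarith) c
    push_cast at a1 a2 a3
    simp only [Function.iterate_zero, id, add_zero] at a1
    rw [uIcc_of_ge (by linarith)] at hx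
    rw [uIcc_of_le (by linarith)]
    obtain ⟨x1, x2⟩ := hx
    push_cast
    refine ⟨⟨?_, ?_⟩, ?_⟩
    · linarith
    · linarith
    · apply ne_of_gt; linarith
  · rw [hn.neg_one_pow] at t0
    rw [hn.add_one.neg_one_pow] at t1
    rw [(hn.add_even (even_two)).neg_one_pow] at t2
    have hpos : tErr ρ n + (k + 1) * tErr ρ (n+1) < 0 := by nlinarith
    rw [et0, et1] at hpos
    rw [et1] at t1
    have a1 := hcore.order (q + k * q' + q') 0 (-(p + k * p' + p')) 0 (by push_cast; linarith) c
    have a2 := hcore.order (q + k * q') (q + k * q' + q') (-(p + k * p')) (-(p + k * p' + p'))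
      (by push_cast; linarith) c
    have a3 := hcore.order_le q (q + k * q') (-p) (-(p + k * p')) (by
      push_cast
      have : 0 ≤ (k:ℝ) * (q' * ρ - p') := mul_nonneg (by positivity) (by linarith)
      linarith) c
    push_cast at a1 a2 a3
    simp only [Function.iterate_zero, id, add_zero] at a1
    rw [uIcc_of_le (by linarith)] at hx
    rw [uIcc_of_ge (by linarith)]
    obtain ⟨x1, x2⟩ := hx
    push_cast
    refine ⟨⟨?_, ?_⟩, ?_⟩
    · linarith
    · linarith
    · apply ne_of_lt; linarith

theorem negative_schwarzian_on_reduced_bridges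
    (f : MCM) (ρ : ℝ) (hirr : Irrational ρ) (hmem : ρ ∈ Set.Ioo (0 : ℝ) 1)
    (hrot : HasRotationNumber f.F ρ) (i₀ : Fin f.N)
    (hcanonical : ∀ i : Fin f.N, ∃ U ∈ nhds (f.c i), ∀ x ∈ U,
      f.F x = f.F (f.c i) + (x - f.c i) * |x - f.c i| ^ (f.s i - 1)) :
    ∃ n₀ : ℕ, ∀ n : ℕ, n₀ ≤ n → ∀ i j : ℕ, IsBridgePair f ρ i₀ n i j →
      ∀ k : ℕ, i + 2 ≤ k → k + 2 ≤ j →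
        ∀ x ∈ atomSet f.F ρ (f.c i₀) (n + 1) (qDen ρ n + k * qDen ρ (n + 1)),
          schwarzianDeriv (f.F^[qDen ρ (n + 1)]) x < 0 := by
  have hcore : Core f.F ρ := core_of_rot f.F ρ f.mono f.smooth.continuous f.deg1 hirr hrot
  obtain ⟨r, hr, hschw⟩ := canonical_schw f.F (f.c i₀) (f.s i₀) (f.s_gt_one i₀) (hcanonical i₀)
  obtain ⟨B, hB, hSB⟩ := f.schw_bdd
  have hs := f.s_gt_one i₀
  set c := f.c i₀ with hc
  set κ := ((f.s i₀)^2 - 1) / 2 with hκ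
  have hκ0 : 0 < κ := by rw [hκ]; nlinarith
  set η := min r (κ / (2 * B)) with hη
  have hη0 : 0 < η := lt_min hr (by positivity)
  obtain ⟨n₀, hn₀⟩ := mcm_deriv_sum f ρ hirr hmem hcore c η hη0
  refine ⟨n₀, ?_⟩
  intro n hn i j hbr k hik hkj x hx
  obtain ⟨-, -, hno, hj⟩ := hbr
  have hka : k < cfDigit ρ (n+1) := by
    rcases hj with hj | hj
    · have := hj.1; omega
    · omega
  have hnc := hno k (by omega) (by omega)
  have hder : deriv (f.F^[qDen ρ (n + 1)]) x ≠ 0 := by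
    intro h0
    exact hnc ⟨hka, x, hx, h0⟩
  obtain ⟨hloc, hne⟩ := atom_loc f.F ρ hirr hmem hcore c n k hka x hx
  set P : ℤ := pNum ρ n + k * pNum ρ (n+1) with hP
  set q' := qDen ρ (n+1) with hq'
  set y := x - (P:ℝ) with hy
  have hxy : x = y + (P:ℝ) := by rw [hy]; ring
  have hper : ∀ t, f.F^[q'] (t + P) = f.F^[q'] t + P := fun t => hcore.iter_add_int q' t P
  rw [hxy, schw_add_per hper]
  rw [hxy, deriv_add_per hper] at hder
  obtain ⟨hsmall, hsum⟩ := hn₀ n hn y hloc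
  rw [schw_iter f.smooth q' y hder]
  have hnz := deriv_iter_ne f.smooth q' y hder
  set I := f.F^[qDen ρ n] c - pNum ρ n - c with hI
  have hyI : |y - c| ≤ |I| := by
    have := abs_sub_left_of_mem_uIcc hloc
    exact this
  have hyc : 0 < |y - c| := abs_pos.2 (sub_ne_zero.2 hne)
  have hI2 : 0 < I^2 := by
    rw [← sq_abs]; have := hyc.trans_le hyI; positivity
  have hq1 : 1 ≤ q' := (qDen_pos_le ρ hirr hmem (n+1)).1
  have h0 : schwarzianDeriv f.F y ≤ -κ / I^2 := by
    rw [hschw y hne (hyI.trans_lt (hsmall.trans_le (min_le_left _ _)))]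
    have h1 : (y - c)^2 ≤ I^2 := sq_le_sq.2 hyI
    have h2 : 0 < (y - c)^2 := by rw [← sq_abs]; positivity
    rw [neg_div, neg_div, neg_le_neg_iff]
    exact div_le_div_of_nonneg_left hκ0.le h2 h1
  obtain ⟨Q, hQ⟩ : ∃ Q, q' = Q + 1 := ⟨q' - 1, by omega⟩
  have hall : (∑ m ∈ Finset.range q', schwarzianDeriv f.F (f.F^[m] y) * (deriv f.F^[m] y)^2) * I^2
      ≤ -κ + B * η := by
    have hS : ∑ m ∈ Finset.range Q, (deriv f.F^[m+1] y)^2 * I^2 ≤ η := by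
      rw [← hq', hQ, Finset.sum_range_succ'] at hsum
      have : 0 ≤ (deriv f.F^[0] y)^2 * I^2 := by positivity
      linarith
    rw [hQ, Finset.sum_range_succ', add_mul, Finset.sum_mul]
    have h1 : ∑ m ∈ Finset.range Q, schwarzianDeriv f.F (f.F^[m+1] y) * (deriv f.F^[m+1] y)^2 * I^2
        ≤ B * ∑ m ∈ Finset.range Q, (deriv f.F^[m+1] y)^2 * I^2 := by
      rw [Finset.mul_sum]
      apply Finset.sum_le_sum
      intro m hm
      rw [mul_assoc]
      apply mul_le_mul_of_nonneg_right _ (by positivity)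
      apply hSB
      exact hnz _ (by rw [hQ]; have := Finset.mem_range.1 hm; omega)
    have h2 : schwarzianDeriv f.F (f.F^[0] y) * (deriv f.F^[0] y)^2 * I^2 ≤ -κ := by
      rw [le_div_iff₀ hI2] at h0
      simpa using h0
    have h3 := mul_le_mul_of_nonneg_left hS hB.le
    linarith
  have hfin : -κ + B * η < 0 := by
    have : η ≤ κ / (2 * B) := min_le_right _ _
    rw [le_div_iff₀ (by positivity)] at this
    linarith
  by_contra hcon
  push Not at hcon
  have := mul_nonneg hcon hI2.le
  linarith
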